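/- arXiv:1405.6408 — 2 statements merged into one kernel-verified Lean document; each statement's English description precedes it below -/
import Mathlib

section
/- Let n be a positive integer and let f_1,…,f_n, g_1,…,g_n : [0,∞) → ℝ be measurable functions such that the product λ ↦ f_i(λ)·g_j(λ) is Lebesgue integrable on [0,∞) for all 1 ≤ i,j ≤ n. Then ∫_{0 ≤ λ_n ≤ λ_{n−1} ≤ … ≤ λ_1 < ∞} det[f_i(λ_j)]_{i,j=1}^n · det[g_i(λ_j)]_{i,j=1}^n dλ_1 ⋯ dλ_n = det[ ∫_0^∞ f_i(λ)·g_j(λ) dλ ]_{i,j=1}^n, where det[h(i,j)]_{i,j=1}^n denotes the determinant of the n×n matrix with (i,j) entry h(i,j). -/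
open MeasureTheory Matrix Set

/-- The pointwise summand `(∏ f_i(l_i)) det g_i(l_j)`. -/
noncomputable def andK {n : ℕ} (f g : Fin n → ℝ → ℝ) (l : Fin n → ℝ) : ℝ :=
  (∏ i, f i (l i)) * (Matrix.of fun i j => g i (l j)).det

lemma andK_expand {n : ℕ} (f g : Fin n → ℝ → ℝ) (l : Fin n → ℝ) :
    andK f g l = ∑ τ : Equiv.Perm (Fin n),
      ((Equiv.Perm.sign τ : ℤ) : ℝ) * ∏ i, (f i (l i) * g (τ i) (l i)) := by
  simp only [andK, Matrix.det_apply', Matrix.of_apply, Finset.mul_sum, Finset.prod_mul_distrib]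
  refine Finset.sum_congr rfl fun τ _ => by ring

lemma and_det_expand {n : ℕ} (f g : Fin n → ℝ → ℝ) (l : Fin n → ℝ) :
    (Matrix.of fun i j => f i (l j)).det * (Matrix.of fun i j => g i (l j)).det
      = ∑ σ : Equiv.Perm (Fin n), andK f g (l ∘ σ) := by
  rw [← Matrix.det_transpose (Matrix.of fun i j => f i (l j)), Matrix.det_apply', Finset.sum_mul]
  refine Finset.sum_congr rfl fun σ _ => ?_
  have h := Matrix.det_permute' σ (Matrix.of fun i j => g i (l j))
  have h2 : ((Matrix.of fun i j => g i (l j)).submatrix id σ)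
    = Matrix.of fun i j => g i ((l ∘ σ) j) := by ext i j; rfl
  rw [h2] at h
  rw [andK, h]
  simp only [Matrix.transpose_apply, Matrix.of_apply, Function.comp]
  ring

lemma andK_eq_zero {n : ℕ} (f g : Fin n → ℝ → ℝ) (l : Fin n → ℝ)
    (h : ¬ Function.Injective l) : andK f g l = 0 := by
  simp only [Function.Injective, not_forall] at h
  obtain ⟨i, j, hij, hne⟩ := h
  rw [andK, Matrix.det_zero_of_column_eq hne (fun k => by simp [hij]), mul_zero]

lemma andK_sum_indicator {n : ℕ} (f g : Fin n → ℝ → ℝ) (l : Fin n → ℝ) :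
    ∑ σ : Equiv.Perm (Fin n),
      ({l : Fin n → ℝ | (∀ i, 0 ≤ l i) ∧ Antitone (l ∘ σ)}).indicator (andK f g) l
      = (Set.univ.pi fun _ : Fin n => Set.Ici (0 : ℝ)).indicator (andK f g) l := by
  by_cases hl : Function.Injective l
  · by_cases h0 : ∀ i, 0 ≤ l i
    · have hs : Antitone (l ∘ Tuple.sort (fun i => OrderDual.toDual (l i))) :=
        fun a b hab => Tuple.monotone_sort (fun i => OrderDual.toDual (l i)) hab
      rw [Finset.sum_eq_single (Tuple.sort (fun i => OrderDual.toDual (l i)))]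
      · rw [Set.indicator_of_mem, Set.indicator_of_mem]
        · exact fun i _ => h0 i
        · exact ⟨h0, hs⟩
      · intro τ _ hτ
        apply Set.indicator_of_notMem
        rintro ⟨-, ha⟩
        apply hτ
        have := Tuple.unique_antitone ha hs
        ext i
        exact congrArg _ (hl (congrFun this i))
      · simp
    · rw [Set.indicator_of_notMem]
      · exact Finset.sum_eq_zero fun σ _ => Set.indicator_of_notMem (fun h => h0 h.1) _
      · exact fun h => h0 fun i => h i (Set.mem_univ i)
  · simp [Set.indicator, andK_eq_zero f g l hl]

lemma and_measurableSet {n : ℕ} (σ : Equiv.Perm (Fin n)) :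
    MeasurableSet {l : Fin n → ℝ | (∀ i, 0 ≤ l i) ∧ Antitone (l ∘ σ)} := by
  simp only [Antitone, Function.comp]
  apply IsClosed.measurableSet
  simp only [Set.ofPred_and, Set.ofPred_forall]
  refine IsClosed.inter (isClosed_iInter fun i => isClosed_le (by fun_prop) (by fun_prop)) ?_
  exact isClosed_iInter fun i => isClosed_iInter fun j => isClosed_iInter fun _ =>
    isClosed_le (by fun_prop) (by fun_prop)

/-- Andréief-type determinant integration identity.  The integral of a
product of two determinants `det [f i (λ j)] · det [g i (λ j)]` over the ordered simplex
`{0 ≤ λ_n ≤ … ≤ λ_1 < ∞}` equals the determinant of the matrix of pairwise integrals. -/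
theorem andreief_identity (n : ℕ) (hn : 0 < n) (f g : Fin n → ℝ → ℝ)
    (hf : ∀ i, Measurable fun x : Set.Ici (0 : ℝ) => f i x)
    (hg : ∀ i, Measurable fun x : Set.Ici (0 : ℝ) => g i x)
    (hint : ∀ i j, IntegrableOn (fun x => f i x * g j x) (Set.Ici (0 : ℝ))) :
    (∫ l in {l : Fin n → ℝ | (∀ i, 0 ≤ l i) ∧ Antitone l},
        (Matrix.of fun i j => f i (l j)).det * (Matrix.of fun i j => g i (l j)).det)
      = (Matrix.of fun i j => ∫ x in Set.Ici (0 : ℝ), f i x * g j x).det := by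
  have hvol : (volume : Measure (Fin n → ℝ)).restrict (Set.univ.pi fun _ => Set.Ici (0 : ℝ))
      = Measure.pi fun _ => (volume : Measure ℝ).restrict (Set.Ici 0) := by
    rw [volume_pi, Measure.restrict_pi_pi]
  have hterm : ∀ τ : Equiv.Perm (Fin n), Integrable
      (fun l : Fin n → ℝ => ((Equiv.Perm.sign τ : ℤ) : ℝ) * ∏ i, (f i (l i) * g (τ i) (l i)))
      (Measure.pi fun _ => (volume : Measure ℝ).restrict (Set.Ici 0)) := fun τ =>
    (Integrable.fintype_prod (f := fun i x => f i x * g (τ i) x)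
      (fun i => hint i (τ i))).const_mul _
  have hK : IntegrableOn (andK f g) (Set.univ.pi fun _ => Set.Ici (0 : ℝ)) := by
    rw [IntegrableOn, hvol, funext (andK_expand f g)]
    exact integrable_finsetSum _ fun τ _ => hterm τ
  have hKint : ∫ l in Set.univ.pi fun _ => Set.Ici (0 : ℝ), andK f g l
      = (Matrix.of fun i j => ∫ x in Set.Ici (0 : ℝ), f i x * g j x).det := by
    rw [hvol]
    simp only [andK_expand]
    rw [integral_finsetSum _ fun τ _ => hterm τ, ← Matrix.det_transpose, Matrix.det_apply']
    refine Finset.sum_congr rfl fun τ _ => ?_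
    rw [integral_const_mul,
      integral_fintype_prod_eq_prod (f := fun i x => f i x * g (τ i) x)]
    rfl
  have hKσ : ∀ σ : Equiv.Perm (Fin n), IntegrableOn (andK f g)
      {l : Fin n → ℝ | (∀ i, 0 ≤ l i) ∧ Antitone (l ∘ σ)} := fun σ =>
    hK.mono_set fun l hl => fun i _ => hl.1 i
  -- change of variables
  have hmp : ∀ σ : Equiv.Perm (Fin n),
      MeasurePreserving (MeasurableEquiv.piCongrLeft (fun _ : Fin n => ℝ) σ.symm)
        volume volume := fun σ => volume_measurePreserving_piCongrLeft _ _
  have hap : ∀ (σ : Equiv.Perm (Fin n)) (l : Fin n → ℝ),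
      MeasurableEquiv.piCongrLeft (fun _ : Fin n => ℝ) σ.symm l = l ∘ σ := by
    intro σ l
    ext i
    have := Equiv.piCongrLeft_apply_apply (fun _ : Fin n => ℝ) σ.symm l (σ i)
    simpa [MeasurableEquiv.coe_piCongrLeft] using this
  have hpre : ∀ σ : Equiv.Perm (Fin n),
      (MeasurableEquiv.piCongrLeft (fun _ : Fin n => ℝ) σ.symm) ⁻¹'
        {l : Fin n → ℝ | (∀ i, 0 ≤ l i) ∧ Antitone (l ∘ σ.symm)}
      = {l : Fin n → ℝ | (∀ i, 0 ≤ l i) ∧ Antitone l} := by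
    intro σ
    ext l
    simp only [Set.mem_preimage, hap, Set.mem_ofPred_eq, Function.comp_assoc,
      Equiv.self_comp_symm, Function.comp_id]
    refine and_congr_left fun _ => ⟨fun h i => ?_, fun h i => h _⟩
    simpa using h (σ.symm i)
  have hI : ∀ σ : Equiv.Perm (Fin n), IntegrableOn (fun l => andK f g (l ∘ σ))
      {l : Fin n → ℝ | (∀ i, 0 ≤ l i) ∧ Antitone l} := by
    intro σ
    have := ((hmp σ).integrableOn_comp_preimage
      (MeasurableEquiv.measurableEmbedding _)).2 (hKσ σ.symm)
    rw [hpre] at this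
    simpa [Function.comp_def, hap] using this
  have hE : ∀ σ : Equiv.Perm (Fin n),
      ∫ l in {l : Fin n → ℝ | (∀ i, 0 ≤ l i) ∧ Antitone l}, andK f g (l ∘ σ)
      = ∫ l in {l : Fin n → ℝ | (∀ i, 0 ≤ l i) ∧ Antitone (l ∘ σ.symm)}, andK f g l := by
    intro σ
    have := (hmp σ).setIntegral_preimage_emb (MeasurableEquiv.measurableEmbedding _) (andK f g)
      {l : Fin n → ℝ | (∀ i, 0 ≤ l i) ∧ Antitone (l ∘ σ.symm)}
    rw [hpre] at this
    simpa only [hap] using this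
  simp only [and_det_expand]
  rw [integral_finsetSum _ fun σ _ => hI σ, Finset.sum_congr rfl fun σ _ => hE σ,
    ← hKint, ← integral_indicator (MeasurableSet.univ_pi fun _ => measurableSet_Ici),
    ← funext (andK_sum_indicator f g), integral_finsetSum]
  · rw [← Equiv.sum_comp (Equiv.inv (Equiv.Perm (Fin n)))]
    refine Finset.sum_congr rfl fun σ _ => ?_
    rw [integral_indicator (and_measurableSet _)]
    rfl
  · intro σ _
    exact (hKσ σ).integrable_indicator (and_measurableSet σ)
end

section
/- Fix a positive integer p, positive integers a < b, set c = a/b ∈ (0,1), and fix an integer N ≥ 0. For a positive integer t set n = a·t and m = b·t. Then there exist a constant C > 0 and a positive integer T such that for all integers t ≥ T (in particular p < n(m−n+1)), |μ0(p,n,m) − Σ_{j=0}^N β_{p,j}(c)/n^{2j}| ≤ C·n^{−2(N+1)}. -/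
open Finset
open Finset

/-- Exact `p`-th moment of the GLRT statistic under `H₀`. -/
noncomputable def mu0 (p n m : ℕ) : ℝ :=
  Real.Gamma ((m : ℝ) * n) / ((n : ℝ) ^ p * Real.Gamma ((m : ℝ) * n - p)) *
    ∏ j ∈ Finset.range n,
      Real.Gamma ((m : ℝ) - n + 1 - p / n + j) / Real.Gamma ((m : ℝ) - n + 1 + j)

/-- Rising factorial `(a)_r = a (a+1) ⋯ (a+r-1)` as a real number. -/
noncomputable def risingFactorial (a : ℕ) (r : ℕ) : ℝ :=
  ∏ i ∈ Finset.range r, ((a : ℝ) + i)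

/-- Coefficients `A_{p,q}(c)` of the asymptotic expansion of `ln μ0`. -/
noncomputable def Acoef (p : ℕ) (c : ℝ) : ℕ → ℝ
  | 0 => p - p * (1 - 1 / c) * Real.log (1 - c)
  | 1 => -((p : ℝ) ^ 2 / 2) * Real.log (1 - c)
          + c * p * (12 - 11 * c + 6 * (1 - (p : ℝ)) * (c - 1)) / (12 * (c - 1))
  | (q + 2) =>
      (c * p) ^ (q + 2) * (c + 12 * p - 12 * c * p - c * ((q + 2 : ℕ) : ℝ) ^ 2)
          / (12 * c * ((q + 2 : ℕ) : ℝ) * (((q + 2 : ℕ) : ℝ) ^ 2 - 1) * (1 - c) ^ (q + 2))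
        + (c * p) ^ (q + 2) * (-12 * p + c * (((q + 2 : ℕ) : ℝ) ^ 2 - 1))
          / (12 * c * ((q + 2 : ℕ) : ℝ) * (((q + 2 : ℕ) : ℝ) ^ 2 - 1))
        - (c ^ (q + 2) / ((q + 2 : ℕ) : ℝ)) * ∑ j ∈ Finset.Icc 1 p, (j : ℝ) ^ (q + 2)
        + ∑ j ∈ Finset.Icc 1 (q + 1),
            (bernoulli (2 * j + 2) : ℝ) * c ^ (2 * j) * risingFactorial (2 * j) (q + 2 - j)
              * (p * c) ^ (q + 2 - j)
              / (4 * j * (j + 1) * (Nat.factorial (q + 2 - j)))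
              * (1 - (1 - c) ^ (-(j : ℤ) - (q + 2 : ℤ)))

/-- Coefficients `β_{p,j}(c)` of the asymptotic expansion of `μ0`. -/
noncomputable def bcoef (p : ℕ) (c : ℝ) (j : ℕ) : ℝ :=
  Real.exp (Acoef p c 0) *
    ∑ i ∈ Finset.univ.filter
        (fun i : Fin j → Fin (j + 1) => ∑ r : Fin j, (r.1 + 1) * (i r).1 = j),
      ∏ r : Fin j, (Acoef p c (r.1 + 1)) ^ (i r).1 / (Nat.factorial (i r).1)


lemma HasSum.conv {f g : ℕ → ℝ} {a b : ℝ} (h : HasSum f a) (hf : ∀ l, g l = f l) (hb : b = a) :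
    HasSum g b := by
  rw [hb, show g = f from funext hf]; exact h

/-- Coefficients of the expansion of the logarithm of the Barnes function. -/
noncomputable def bK (k : ℕ) : ℝ := (bernoulli (2 * k + 2) : ℝ) / (4 * k * (k + 1))

/-- Truncated expansion of the logarithm of the Barnes function. -/
noncomputable def LL (K : ℕ) (z : ℝ) : ℝ :=
  z ^ 2 / 2 * Real.log z - 3 * z ^ 2 / 4 - Real.log z / 12
    + ∑ k ∈ Finset.Icc 1 K, bK k * (1 / z ^ (2 * k))

/-- Tail of `(1-u)^2 log (1-u)`. -/
noncomputable def E3 (u : ℝ) : ℝ :=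
  -(1 / 2) * ((1 - u) ^ 2 * Real.log (1 - u) + u - 3 / 2 * u ^ 2)

lemma LL_diff (K : ℕ) (z u : ℝ) (hz : 0 < z) (hu : u < 1) :
    LL K (z * (1 - u)) - LL K z = z ^ 2 * (u ^ 2 / 2 - u) * Real.log z + z ^ 2 * u
      - z ^ 2 * E3 u - Real.log (1 - u) / 12
      + ∑ k ∈ Finset.Icc 1 K, bK k * (1 / z ^ (2 * k)) * (1 / (1 - u) ^ (2 * k) - 1) := by
  have h1 : 0 < 1 - u := by linarith
  have hs : ∑ k ∈ Finset.Icc 1 K, bK k * (1 / z ^ (2 * k)) * (1 / (1 - u) ^ (2 * k) - 1)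
      = ∑ k ∈ Finset.Icc 1 K, bK k * (1 / (z * (1 - u)) ^ (2 * k))
        - ∑ k ∈ Finset.Icc 1 K, bK k * (1 / z ^ (2 * k)) := by
    rw [← Finset.sum_sub_distrib]
    refine Finset.sum_congr rfl fun k _ => ?_
    rw [mul_pow]
    field_simp
  rw [hs]
  unfold LL E3
  rw [Real.log_mul hz.ne' h1.ne']
  ring

lemma hasSum_E3 (u : ℝ) (hu : |u| < 1) :
    HasSum (fun l : ℕ => u ^ (l + 3) / (((l : ℝ) + 1) * (l + 2) * (l + 3))) (E3 u) := by
  have h := Real.hasSum_pow_div_log_of_abs_lt_one hu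
  have h2 := (hasSum_nat_add_iff' (f := fun n : ℕ => u ^ (n + 1) / ((n : ℝ) + 1)) 1).2 h
  have h3 := (hasSum_nat_add_iff' (f := fun n : ℕ => u ^ (n + 1) / ((n : ℝ) + 1)) 2).2 h
  have := ((h3.add (h.mul_left (u ^ 2))).sub (h2.mul_left (2 * u))).mul_left (1 / 2)
  refine this.conv (fun l => ?_) ?_
  · push_cast
    field_simp
    ring
  · unfold E3
    simp [Finset.sum_range_succ]
    ring

lemma hasSum_choose (j : ℕ) (v : ℝ) (hv : |v| < 1) :
    HasSum (fun l : ℕ => ((l.choose j : ℕ) : ℝ) * v ^ (l + 1)) ((v / (1 - v)) ^ (j + 1)) := by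
  have h := hasSum_choose_mul_geometric_of_norm_lt_one (𝕜 := ℝ) j (r := v) (by simpa using hv)
  have h' := h.mul_left (v ^ (j + 1))
  have := (hasSum_nat_add_iff (f := fun l : ℕ => ((l.choose j : ℕ) : ℝ) * v ^ (l + 1))
    (g := (v / (1 - v)) ^ (j + 1)) j).1 (by
      refine h'.conv (fun l => ?_) ?_
      · ring
      · rw [div_pow]; ring)
  rw [Finset.sum_eq_zero, add_zero] at this
  · exact this
  · intro i hi
    rw [Nat.choose_eq_zero_of_lt (Finset.mem_range.1 hi)]; simp

lemma sum_even_odd (f : ℕ → ℚ) (M : ℕ) :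
    ∑ j ∈ Finset.range (2 * M), f j = ∑ i ∈ Finset.range M, (f (2 * i) + f (2 * i + 1)) := by
  induction M with
  | zero => simp
  | succ M ih =>
    rw [show 2 * (M + 1) = 2 * M + 1 + 1 by ring, Finset.sum_range_succ, Finset.sum_range_succ, ih,
      Finset.sum_range_succ]
    ring

lemma bern_aux (L : ℕ) (hL : 1 ≤ L) :
    ∑ j ∈ Finset.range (2 * (L + 1)), ((j : ℚ) - 1) * ((2 * L + 2).choose j : ℚ) * bernoulli j
      = 0 := by
  have h1 := sum_bernoulli (2 * L + 2)
  have h2 := sum_bernoulli (2 * L + 1)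
  rw [if_neg (by omega)] at h1 h2
  have h3 : ∑ j ∈ Finset.range (2 * L + 2), ((2 * L + 1).choose j : ℚ) * bernoulli j = 0 := by
    rw [Finset.sum_range_succ, h2, bernoulli_eq_zero_of_odd (by exact ⟨L, rfl⟩) (by omega)]
    simp
  have : ∀ j ∈ Finset.range (2 * (L + 1)),
      ((j : ℚ) - 1) * ((2 * L + 2).choose j : ℚ) * bernoulli j
      = (2 * L + 1) * (((2 * L + 2).choose j : ℚ) * bernoulli j)
        - (2 * L + 2) * (((2 * L + 1).choose j : ℚ) * bernoulli j) := by
    intro j hj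
    have hj' := Finset.mem_range.1 hj
    have := Nat.choose_mul_succ_eq (2 * L + 1) j
    have h' : ((2 * L + 1).choose j : ℚ) * (2 * L + 2) = ((2 * L + 2).choose j : ℚ) * (2 * L + 2 - j) := by
      have h := congrArg (Nat.cast (R := ℚ)) this
      rw [Nat.cast_mul, Nat.cast_mul, Nat.cast_sub (by omega)] at h
      push_cast at h
      rw [show (2 * L + 1 + 1) = 2 * L + 2 by ring] at h
      linarith
    linear_combination (bernoulli j) * h'
  rw [Finset.sum_congr rfl this, Finset.sum_sub_distrib, ← Finset.mul_sum, ← Finset.mul_sum,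
    show 2 * (L + 1) = 2 * L + 2 by ring, h1, h3]
  simp

lemma bern_aux2 (L : ℕ) (hL : 1 ≤ L) :
    ∑ k ∈ Finset.range L, (2 * (k : ℚ) + 1) * ((2 * L + 2).choose (2 * k + 2) : ℚ)
      * bernoulli (2 * k + 2) = 1 := by
  have h := bern_aux L hL
  rw [sum_even_odd, Finset.sum_range_succ'] at h
  have h0 : ∀ i ∈ Finset.range L,
    ((((2 * (i + 1) : ℕ) : ℚ) - 1) * ((2 * L + 2).choose (2 * (i + 1)) : ℚ) * bernoulli (2 * (i + 1))
     + (((2 * (i + 1) + 1 : ℕ) : ℚ) - 1) * ((2 * L + 2).choose (2 * (i + 1) + 1) : ℚ) * bernoulli (2 * (i + 1) + 1))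
     = (2 * (i : ℚ) + 1) * ((2 * L + 2).choose (2 * i + 2) : ℚ)
      * bernoulli (2 * i + 2) := by
    intro i _
    rw [bernoulli_eq_zero_of_odd (n := 2 * (i + 1) + 1) ⟨i + 1, rfl⟩ (by omega),
      show 2 * (i + 1) = 2 * i + 2 by ring]
    push_cast
    ring
  rw [Finset.sum_congr rfl h0] at h
  simp at h
  linarith

lemma bK_choose (L k : ℕ) (hL : 1 ≤ L) (hk : 1 ≤ k) :
    bK k * ((2 * L - 1).choose (2 * k - 1) : ℝ) =
      (2 * (k : ℝ) + 1) * ((2 * L + 2).choose (2 * k + 2) : ℝ) * (bernoulli (2 * k + 2) : ℝ)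
        / (2 * L * (2 * L + 1) * (2 * L + 2)) := by
  obtain ⟨k, rfl⟩ : ∃ k', k = k' + 1 := ⟨k - 1, by omega⟩
  obtain ⟨L, rfl⟩ : ∃ k', L = k' + 1 := ⟨L - 1, by omega⟩
  rw [show 2 * (L + 1) - 1 = 2 * L + 1 by omega, show 2 * (k + 1) - 1 = 2 * k + 1 by omega,
    show 2 * (L + 1) + 2 = 2 * L + 4 by ring]
  have e1 := congrArg (Nat.cast (R := ℝ)) (Nat.add_one_mul_choose_eq (2 * L + 1) (2 * k + 1))
  have e2 := congrArg (Nat.cast (R := ℝ)) (Nat.add_one_mul_choose_eq (2 * L + 2) (2 * k + 2))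
  have e3 := congrArg (Nat.cast (R := ℝ)) (Nat.add_one_mul_choose_eq (2 * L + 3) (2 * k + 3))
  unfold bK
  rw [show 2 * (k + 1) + 2 = 2 * k + 4 by ring]
  simp only [Nat.cast_mul] at e1 e2 e3
  rw [show 2 * L + 1 + 1 = 2 * L + 2 by ring, show 2 * k + 1 + 1 = 2 * k + 2 by ring] at e1
  rw [show 2 * L + 2 + 1 = 2 * L + 3 by ring, show 2 * k + 2 + 1 = 2 * k + 3 by ring] at e2
  rw [show 2 * L + 3 + 1 = 2 * L + 4 by ring, show 2 * k + 3 + 1 = 2 * k + 4 by ring] at e3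
  push_cast at e1 e2 e3 ⊢
  have f1 : ((2 * L + 1).choose (2 * k + 1) : ℝ)
      = ((2 * L + 2).choose (2 * k + 2) : ℝ) * (2 * k + 2) / (2 * L + 2) := by
    field_simp; linarith
  have f2 : ((2 * L + 2).choose (2 * k + 2) : ℝ)
      = ((2 * L + 3).choose (2 * k + 3) : ℝ) * (2 * k + 3) / (2 * L + 3) := by
    field_simp; linarith
  have f3 : ((2 * L + 3).choose (2 * k + 3) : ℝ)
      = ((2 * L + 4).choose (2 * k + 4) : ℝ) * (2 * k + 4) / (2 * L + 4) := by
    field_simp; linarith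
  rw [f1, f2, f3]
  field_simp
  ring

/-- coefficient of the second difference -/
noncomputable def psi (K l : ℕ) : ℝ :=
  -(1 / (((l : ℝ) + 1) * (l + 2) * (l + 3))) + 1 / (12 * ((l : ℝ) + 1))
    + ∑ k ∈ Finset.Icc 1 K, bK k * ((l.choose (2 * k - 1) : ℝ) - if l + 1 = 2 * k then 1 else 0)

lemma psi_zero (K L : ℕ) (hL : 1 ≤ L) (hK : L ≤ K) : psi K (2 * L - 1) = 0 := by
  have h1 : ∑ k ∈ Finset.Icc 1 K, bK k * (((2 * L - 1).choose (2 * k - 1) : ℝ)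
      - if 2 * L - 1 + 1 = 2 * k then 1 else 0)
      = ∑ k ∈ Finset.Ico 1 L, bK k * ((2 * L - 1).choose (2 * k - 1) : ℝ) := by
    symm
    refine Finset.sum_subset_zero_on_sdiff ?_ ?_ ?_
    · intro k hk; simp at hk ⊢; omega
    · intro k hk
      simp at hk
      rcases eq_or_lt_of_le (hk.2 hk.1.1) with h | h
      · subst h
        rw [if_pos (by omega)]; simp
      · rw [if_neg (by omega), Nat.choose_eq_zero_of_lt (by omega)]; simp
    · intro k hk
      simp at hk
      rw [if_neg (by omega)]; simp
  have h2 := congrArg (Rat.cast (K := ℝ)) (bern_aux2 L hL)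
  push_cast at h2
  rw [Finset.range_eq_Ico, Finset.sum_eq_sum_Ico_succ_bot (by omega)] at h2
  have h3 : ∑ k ∈ Finset.Ico 1 L, bK k * ((2 * L - 1).choose (2 * k - 1) : ℝ)
    = (∑ k ∈ Finset.Ico 1 L, (2 * (k : ℝ) + 1) * ((2 * L + 2).choose (2 * k + 2) : ℝ) * (bernoulli (2 * k + 2) : ℝ))
        / (2 * L * (2 * L + 1) * (2 * L + 2)) := by
    rw [Finset.sum_div]
    refine Finset.sum_congr rfl fun k hk => ?_
    exact bK_choose L k hL (Finset.mem_Ico.1 hk).1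
  unfold psi
  rw [h1, h3]
  rw [zero_add] at h2
  rw [← eq_sub_iff_add_eq'] at h2
  rw [h2]
  have hc : ((2 * L + 2).choose (2 * 0 + 2) : ℝ) = (2 * L + 2) * (2 * L + 1) / 2 := by
    rw [mul_zero, zero_add, Nat.cast_choose_two]; push_cast; ring
  rw [hc]
  have hL' : (0 : ℝ) < L := by exact_mod_cast hL
  have hb : (bernoulli (2 * 0 + 2) : ℚ) = 1 / 6 := by simp [bernoulli_two]
  rw [hb, Nat.cast_sub (by omega)]
  push_cast
  rw [show (2 * (L : ℝ) - 1 + 1) = 2 * L by ring, show (2 * (L : ℝ) - 1 + 2) = 2 * L + 1 by ring,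
    show (2 * (L : ℝ) - 1 + 3) = 2 * L + 2 by ring]
  field_simp
  ring

lemma tail_bound (d : ℕ → ℝ) (Φ : ℝ → ℝ) (ρ : ℝ) (hρ : 0 < ρ)
    (H : ∀ y, 0 < y → y < ρ → HasSum (fun l => d l * y ^ l) (Φ y)) (M : ℕ) :
    ∃ C : ℝ, 0 ≤ C ∧ ∀ y, 0 < y → y ≤ ρ / 2 →
      |Φ y - ∑ l ∈ Finset.range M, d l * y ^ l| ≤ C * y ^ M := by
  have hr : 0 < ρ / 2 := by positivity
  have h0 := (H (ρ / 2) hr (by linarith)).summable.abs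
  have h1 := ((summable_nat_add_iff M).2 h0).mul_right (1 / (ρ / 2) ^ M)
  have h2 : Summable fun l => |d (l + M)| * (ρ / 2) ^ l := by
    refine h1.congr fun l => ?_
    rw [abs_mul, abs_of_pos (pow_pos hr _), pow_add]
    field_simp
  refine ⟨∑' l, |d (l + M)| * (ρ / 2) ^ l, tsum_nonneg fun l => by positivity, ?_⟩
  intro y hy hy2
  have h3 := (hasSum_nat_add_iff' M).2 (H y hy (by linarith))
  rw [← h3.tsum_eq]
  have h4 : ∀ l, |d (l + M) * y ^ (l + M)| ≤ (|d (l + M)| * (ρ / 2) ^ l) * y ^ M := by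
    intro l
    rw [abs_mul, abs_of_pos (pow_pos hy _), pow_add, ← mul_assoc]
    gcongr
  rw [← tsum_mul_right, ← Real.norm_eq_abs]
  exact tsum_of_norm_bounded (h2.mul_right (y ^ M)).hasSum h4

lemma hasSum_Psi (K : ℕ) (v : ℝ) (hv : |v| < 1) (hv0 : v ≠ 0) :
    HasSum (fun l : ℕ => psi K l * v ^ (l + 1))
      (-(E3 v / v ^ 2) - Real.log (1 - v) / 12
        + ∑ k ∈ Finset.Icc 1 K, bK k * (v ^ (2 * k)) * (1 / (1 - v) ^ (2 * k) - 1)) := by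
  have a1 := ((hasSum_E3 v hv).mul_right (1 / v ^ 2)).neg
  have a2 := (Real.hasSum_pow_div_log_of_abs_lt_one hv).mul_right (1 / 12)
  have a3 : ∀ k ∈ Finset.Icc 1 K, HasSum (fun l : ℕ =>
      bK k * ((l.choose (2 * k - 1) : ℝ) - if l + 1 = 2 * k then 1 else 0) * v ^ (l + 1))
      (bK k * (v ^ (2 * k)) * (1 / (1 - v) ^ (2 * k) - 1)) := by
    intro k hk
    have hk1 := (Finset.mem_Icc.1 hk).1
    have b1 := hasSum_choose (2 * k - 1) v hv
    have b2 := hasSum_ite_eq (2 * k - 1) (v ^ (2 * k))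
    refine ((b1.sub b2).mul_left (bK k)).conv (fun l => ?_) ?_
    · by_cases h : l = 2 * k - 1
      · rw [if_pos h, if_pos (by omega), show l + 1 = 2 * k by omega]; ring
      · rw [if_neg h, if_neg (by omega)]; ring
    · rw [show 2 * k - 1 + 1 = 2 * k by omega, div_pow]; ring
  refine ((a1.add a2).add (hasSum_sum a3)).conv (fun l => ?_) ?_
  · unfold psi
    rw [add_mul, add_mul, Finset.sum_mul]
    congr 1
    rw [show v ^ (l + 3) = v ^ (l + 1) * v ^ 2 by ring]
    field_simp
  · ring

lemma second_diff (K : ℕ) : ∃ C : ℝ, 0 ≤ C ∧ ∀ z : ℝ, 2 ≤ z →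
    |LL K (z + 1) - 2 * LL K z + LL K (z - 1) - Real.log z| ≤ C / z ^ (2 * K) := by
  obtain ⟨C, hC, h⟩ := tail_bound (fun l => psi K l * (1 + (-1) ^ (l + 1)))
    (fun w => (LL K (w⁻¹ + 1) - 2 * LL K w⁻¹ + LL K (w⁻¹ - 1) - Real.log w⁻¹) / w) 1 one_pos (by
      intro w hw hw1
      have e1 := LL_diff K w⁻¹ w (by positivity) hw1
      have e2 := LL_diff K w⁻¹ (-w) (by positivity) (by linarith)
      rw [show w⁻¹ * (1 - w) = w⁻¹ - 1 by field_simp] at e1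
      rw [show w⁻¹ * (1 - -w) = w⁻¹ + 1 by field_simp; ring] at e2
      have s1 := hasSum_Psi K w (by rw [abs_of_pos hw]; exact hw1) hw.ne'
      have s2 := hasSum_Psi K (-w) (by rw [abs_neg, abs_of_pos hw]; exact hw1) (neg_ne_zero.2 hw.ne')
      refine ((s1.add s2).mul_right (1 / w)).conv (fun l => ?_) ?_
      · rw [neg_pow w (l + 1)]
        field_simp
        ring
      · rw [show LL K (w⁻¹ + 1) - 2 * LL K w⁻¹ + LL K (w⁻¹ - 1) - Real.log w⁻¹
          = (LL K (w⁻¹ + 1) - LL K w⁻¹) + (LL K (w⁻¹ - 1) - LL K w⁻¹) - Real.log w⁻¹ by ring, e1, e2]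
        have q1 : ∀ u : ℝ, ∑ k ∈ Finset.Icc 1 K, bK k * (1 / w⁻¹ ^ (2 * k)) * (1 / (1 - u) ^ (2 * k) - 1)
          = ∑ k ∈ Finset.Icc 1 K, bK k * (w ^ (2 * k)) * (1 / (1 - u) ^ (2 * k) - 1) := by
          intro u
          refine Finset.sum_congr rfl fun k _ => ?_
          rw [inv_pow, one_div, inv_inv]
        have q2 : ∀ u : ℝ, ∑ k ∈ Finset.Icc 1 K, bK k * ((-w) ^ (2 * k)) * (1 / (1 - u) ^ (2 * k) - 1)
          = ∑ k ∈ Finset.Icc 1 K, bK k * (w ^ (2 * k)) * (1 / (1 - u) ^ (2 * k) - 1) := by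
          intro u
          refine Finset.sum_congr rfl fun k _ => ?_
          rw [(even_two_mul k).neg_pow]
        rw [q1, q1, q2]
        rw [neg_sq, inv_pow]
        rw [div_eq_mul_one_div]
        congr 1
        field_simp
        ring) (2 * K)
  refine ⟨C, hC, fun z hz => ?_⟩
  have hz0 : 0 < z := by linarith
  have := h z⁻¹ (by positivity) (by
    rw [inv_le_comm₀ hz0 (by norm_num)]; norm_num; exact hz)
  rw [Finset.sum_eq_zero, sub_zero, inv_inv, div_inv_eq_mul, abs_mul, abs_of_pos hz0, inv_pow,
    ← div_eq_mul_inv] at this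
  · refine le_trans ?_ this
    exact le_mul_of_one_le_right (abs_nonneg _) (by linarith)
  · intro l hl
    have hl := Finset.mem_range.1 hl
    rcases Nat.even_or_odd' l with ⟨j, rfl | rfl⟩
    · rw [Odd.neg_one_pow ⟨j, rfl⟩]; simp
    · have := psi_zero K (j + 1) (by omega) (by omega)
      rw [show 2 * (j + 1) - 1 = 2 * j + 1 by omega] at this
      rw [this]; simp

lemma logGamma_add_one (z : ℝ) (hz : 0 < z) :
    Real.log (Real.Gamma (z + 1)) = Real.log (Real.Gamma z) + Real.log z := by
  rw [Real.Gamma_add_one hz.ne', Real.log_mul hz.ne' (Real.Gamma_pos_of_pos hz).ne']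
  ring

lemma gamma_sandwich (k h : ℝ) (h0 : 0 ≤ h) (h1 : h ≤ 1) (hk : 1 < k) :
    h * Real.log (k - 1) ≤ Real.log (Real.Gamma k) - Real.log (Real.Gamma (k - h)) ∧
    Real.log (Real.Gamma k) - Real.log (Real.Gamma (k - h)) ≤ h * Real.log (k - h) := by
  have hc := Real.convexOn_log_Gamma
  have e1 := hc.2 (show k ∈ Set.Ioi (0 : ℝ) by simp; linarith)
    (show k - 1 ∈ Set.Ioi (0 : ℝ) by simp; linarith)
    (show 0 ≤ 1 - h by linarith) h0 (by ring)
  have e2 := hc.2 (show k - h ∈ Set.Ioi (0 : ℝ) by simp; linarith)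
    (show k - h + 1 ∈ Set.Ioi (0 : ℝ) by simp; linarith)
    (show 0 ≤ 1 - h by linarith) h0 (by ring)
  simp only [smul_eq_mul, Function.comp] at e1 e2
  rw [show (1 - h) * k + h * (k - 1) = k - h by ring] at e1
  rw [show (1 - h) * (k - h) + h * (k - h + 1) = k by ring] at e2
  have g1 := logGamma_add_one (k - 1) (by linarith)
  have g2 := logGamma_add_one (k - h) (by linarith)
  rw [show k - 1 + 1 = k by ring] at g1
  rw [g2] at e2
  rw [g1] at e1 ⊢
  constructor <;> nlinarith

/-- Difference between the exact log-Gamma difference and its approximation. -/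
noncomputable def QQ (K : ℕ) (h z : ℝ) : ℝ :=
  (Real.log (Real.Gamma z) - Real.log (Real.Gamma (z - h)))
    - (LL K z - LL K (z - 1) - LL K (z - h) + LL K (z - h - 1))

lemma QQ_step (K : ℕ) : ∃ C : ℝ, 0 ≤ C ∧ ∀ z h : ℝ, 0 ≤ h → h ≤ 1 → 3 ≤ z →
    |QQ K h (z + 1) - QQ K h z| ≤ C / (z - h) ^ (2 * K) := by
  obtain ⟨C, hC, H⟩ := second_diff K
  refine ⟨2 * C, by positivity, fun z h h0 h1 hz => ?_⟩
  have a1 := H z (by linarith)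
  have a2 := H (z - h) (by linarith)
  have hle : C / z ^ (2 * K) ≤ C / (z - h) ^ (2 * K) := by
    have : 0 < z - h := by linarith
    gcongr
    linarith
  have g1 := logGamma_add_one z (by linarith)
  have g2 := logGamma_add_one (z - h) (by linarith)
  have : QQ K h (z + 1) - QQ K h z =
      (LL K (z - h + 1) - 2 * LL K (z - h) + LL K (z - h - 1) - Real.log (z - h))
      - (LL K (z + 1) - 2 * LL K z + LL K (z - 1) - Real.log z) := by
    unfold QQ
    rw [show z + 1 - h = z - h + 1 by ring, g1, g2, show z + 1 - 1 = z by ring,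
      show z - h + 1 - 1 = z - h by ring]
    ring
  rw [this]
  refine (abs_sub _ _).trans ?_
  rw [mul_div_assoc]
  linarith

lemma E3_bound : ∃ C : ℝ, 0 ≤ C ∧ ∀ u : ℝ, 0 < u → u ≤ 1 / 2 → |E3 u| ≤ C * u ^ 3 := by
  obtain ⟨C, hC, h⟩ := tail_bound (fun l => 1 / (((l : ℝ) + 1) * (l + 2) * (l + 3)))
    (fun u => E3 u / u ^ 3) 1 one_pos (by
      intro y hy hy1
      refine ((hasSum_E3 y (by rw [abs_of_pos hy]; exact hy1)).mul_right (1 / y ^ 3)).conv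
        (fun l => ?_) ?_
      · rw [pow_add]; field_simp
      · ring) 0
  refine ⟨C, hC, fun u hu hu2 => ?_⟩
  have := h u hu hu2
  simp only [Finset.range_zero, Finset.sum_empty, sub_zero, pow_zero, mul_one, abs_div,
    abs_of_pos (pow_pos hu 3)] at this
  rwa [div_le_iff₀ (pow_pos hu 3)] at this

open Filter Topology in
/-- the remainder in the first difference tends to zero -/
lemma rem_tendsto (K : ℕ) (h : ℝ) (h0 : 0 < h) :
    Tendsto (fun z : ℝ => LL K z - LL K (z - h) - ((z * h - h ^ 2 / 2) * Real.log z - z * h))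
      atTop (𝓝 0) := by
  have hu : Tendsto (fun z : ℝ => h / z) atTop (𝓝 0) := tendsto_const_nhds.div_atTop tendsto_id
  have hu1 : Tendsto (fun z : ℝ => 1 - h / z) atTop (𝓝 1) := by
    simpa using (tendsto_const_nhds (x := (1 : ℝ))).sub hu
  have t1 : Tendsto (fun z : ℝ => z ^ 2 * E3 (h / z)) atTop (𝓝 0) := by
    obtain ⟨C, hC, H⟩ := E3_bound
    have : Tendsto (fun z : ℝ => C * h ^ 3 / z) atTop (𝓝 0) :=
      tendsto_const_nhds.div_atTop tendsto_id
    refine squeeze_zero_norm' ?_ this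
    filter_upwards [eventually_ge_atTop (2 * h)] with z hz
    have hz0 : 0 < z := by linarith
    have := H (h / z) (by positivity) (by rw [div_le_iff₀ hz0]; linarith)
    rw [Real.norm_eq_abs, abs_mul, abs_of_pos (by positivity : 0 < z ^ 2)]
    calc z ^ 2 * |E3 (h / z)| ≤ z ^ 2 * (C * (h / z) ^ 3) := by gcongr
      _ = C * h ^ 3 / z := by field_simp
  have t2 : Tendsto (fun z : ℝ => Real.log (1 - h / z) / 12) atTop (𝓝 0) := by
    simpa using (hu1.log one_ne_zero).div_const 12
  have t3 : Tendsto (fun z : ℝ => ∑ k ∈ Finset.Icc 1 K,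
      bK k * (1 / z ^ (2 * k)) * (1 / (1 - h / z) ^ (2 * k) - 1)) atTop (𝓝 0) := by
    rw [← Finset.sum_const_zero (s := Finset.Icc 1 K)]
    refine tendsto_finsetSum _ fun k hk => ?_
    have hk1 := (Finset.mem_Icc.1 hk).1
    have s1 : Tendsto (fun z : ℝ => 1 / z ^ (2 * k)) atTop (𝓝 0) :=
      tendsto_const_nhds.div_atTop (tendsto_pow_atTop (by omega))
    have s2 : Tendsto (fun z : ℝ => 1 / (1 - h / z) ^ (2 * k) - 1) atTop (𝓝 (1 / 1 ^ (2 * k) - 1)) :=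
      (tendsto_const_nhds.div (hu1.pow _) (by simp)).sub_const 1
    simpa using (s1.const_mul (bK k)).mul s2
  have := (t1.add t2).sub t3
  rw [add_zero, sub_zero] at this
  refine this.congr' ?_
  filter_upwards [eventually_gt_atTop h, eventually_gt_atTop 0] with z hz hz0
  have e := LL_diff K z (h / z) hz0 (by rw [div_lt_one hz0]; exact hz)
  rw [show z * (1 - h / z) = z - h by field_simp] at e
  have e' : z ^ 2 * ((h / z) ^ 2 / 2 - h / z) = -(z * h - h ^ 2 / 2) := by
    field_simp; ring
  have e'' : z ^ 2 * (h / z) = z * h := by field_simp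
  rw [e', e''] at e
  linarith

open Filter Topology in
lemma QQ_tendsto (K : ℕ) (h : ℝ) (h0 : 0 < h) (h1 : h ≤ 1) :
    Tendsto (QQ K h) atTop (𝓝 0) := by
  have a1 : Tendsto (fun z => Real.log (Real.Gamma z) - Real.log (Real.Gamma (z - h)) - h * Real.log z)
      atTop (𝓝 0) := by
    have l1 := (Real.tendsto_log_comp_add_sub_log (-1)).const_mul h
    have l2 := (Real.tendsto_log_comp_add_sub_log (-h)).const_mul h
    rw [mul_zero] at l1 l2
    refine tendsto_of_tendsto_of_tendsto_of_le_of_le' l1 l2 ?_ ?_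
    · filter_upwards [eventually_gt_atTop 1] with z hz
      have := (gamma_sandwich z h h0.le h1 hz).1
      rw [← sub_eq_add_neg]; linarith
    · filter_upwards [eventually_gt_atTop 1] with z hz
      have := (gamma_sandwich z h h0.le h1 hz).2
      rw [← sub_eq_add_neg]; linarith
  have hm : Tendsto (fun z : ℝ => z - 1) atTop atTop := tendsto_atTop_add_const_right _ (-1) tendsto_id
  have a2 := rem_tendsto K h h0
  have a3 := a2.comp hm
  have a4 := ((Real.tendsto_mul_log_one_add_div_atTop 1).comp hm).const_mul h
  have a5 := (Real.tendsto_log_comp_add_sub_log (-1)).const_mul (h ^ 2 / 2)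
  have := (((a1.sub a2).add a3).sub a4).sub a5
  have := this.add_const h
  simp only [mul_zero, sub_zero, add_zero, mul_one, zero_sub, neg_add_cancel] at this
  refine this.congr' ?_
  filter_upwards [eventually_gt_atTop 1] with z hz
  have hz1 : 0 < z - 1 := by linarith
  simp only [Function.comp]
  have : Real.log (1 + 1 / (z - 1)) = Real.log z - Real.log (z - 1) := by
    rw [← Real.log_div (by linarith) hz1.ne']
    congr 1; field_simp; ring
  rw [this, ← sub_eq_add_neg]
  unfold QQ
  rw [show z - 1 - h = z - h - 1 by ring]
  ring

open Filter Topology in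
lemma QQ_bound (K : ℕ) (hK : 1 ≤ K) : ∃ C : ℝ, 0 ≤ C ∧ ∀ z h : ℝ, 0 < h → h ≤ 1 → 3 ≤ z →
    |QQ K h z| ≤ C / (z - h) ^ (2 * K - 2) := by
  obtain ⟨C, hC, H⟩ := QQ_step K
  refine ⟨C, hC, fun z h h0 h1 hz => ?_⟩
  set y := z - h with hy
  have hy2 : 2 ≤ y := by linarith
  set D := C / y ^ (2 * K - 2) with hD
  have hD0 : 0 ≤ D := by positivity
  have key : ∀ J : ℕ, |QQ K h z| ≤ |QQ K h (z + J)| + D * (1 / (y - 1) - 1 / (y + J - 1)) := by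
    intro J
    induction J with
    | zero => simp
    | succ J ih =>
      have hJ : (0 : ℝ) ≤ J := Nat.cast_nonneg J
      have s := H (z + J) h h0.le h1 (by linarith)
      rw [show z + J + 1 = z + ((J + 1 : ℕ) : ℝ) by push_cast; ring,
        show z + J - h = y + J by rw [hy]; ring] at s
      have s2 : C / (y + J) ^ (2 * K) ≤ D * (1 / (y + J - 1) - 1 / (y + J)) := by
        have p1 : 0 < y + J - 1 := by linarith
        have p2 : 0 < y + J := by linarith
        have : 1 / (y + J - 1) - 1 / (y + J) = 1 / ((y + J - 1) * (y + J)) := by field_simp; ring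
        rw [this, hD, div_mul_div_comm, mul_one]
        have hp : (y + J) ^ (2 * K) = (y + J) ^ (2 * K - 2) * ((y + J) * (y + J)) := by
          rw [← pow_two, ← pow_add]; congr 1; omega
        rw [hp]
        gcongr <;> linarith
      have tri : |QQ K h (z + J)| ≤ |QQ K h (z + ((J + 1 : ℕ) : ℝ))|
          + |QQ K h (z + ((J + 1 : ℕ) : ℝ)) - QQ K h (z + J)| := by
        have := abs_sub_abs_le_abs_sub (QQ K h (z + J)) (QQ K h (z + ((J + 1 : ℕ) : ℝ)))
        rw [abs_sub_comm] at this
        linarith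
      have e : y + ((J + 1 : ℕ) : ℝ) - 1 = y + J := by push_cast; ring
      rw [e]
      have : D * (1 / (y - 1) - 1 / (y + J)) = D * (1 / (y - 1) - 1 / (y + J - 1))
        + D * (1 / (y + J - 1) - 1 / (y + J)) := by ring
      linarith
  have key2 : ∀ J : ℕ, |QQ K h z| ≤ |QQ K h (z + J)| + D := by
    intro J
    refine (key J).trans ?_
    have hJ : (0 : ℝ) ≤ J := Nat.cast_nonneg J
    have : 1 / (y - 1) - 1 / (y + J - 1) ≤ 1 := by
      have q1 : 1 / (y - 1) ≤ 1 := by rw [div_le_one (by linarith)]; linarith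
      have q2 : 0 ≤ 1 / (y + J - 1) := by
        apply div_nonneg zero_le_one; linarith
      linarith
    nlinarith
  have lim : Tendsto (fun J : ℕ => |QQ K h (z + J)| + D) atTop (𝓝 (|0| + D)) := by
    refine (Tendsto.abs ?_).add_const D
    exact (QQ_tendsto K h h0 h1).comp
      (tendsto_atTop_add_const_left _ z tendsto_natCast_atTop_atTop)
  rw [abs_zero, zero_add] at lim
  exact ge_of_tendsto' lim key2

lemma logGamma_sub_nat (X : ℝ) (p : ℕ) (hX : (p : ℝ) < X) :
    Real.log (Real.Gamma X) - Real.log (Real.Gamma (X - p))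
      = ∑ j ∈ Finset.Icc 1 p, Real.log (X - j) := by
  induction p with
  | zero => simp
  | succ p ih =>
    push_cast at hX
    rw [Finset.sum_Icc_succ_top (by omega), ← ih (by linarith)]
    have := logGamma_add_one (X - (p + 1)) (by linarith)
    rw [show X - ((p : ℝ) + 1) + 1 = X - p by ring] at this
    push_cast
    linarith

lemma tele (F : ℝ → ℝ) (s : ℝ) (n : ℕ) :
    ∑ i ∈ Finset.range n, (F (s + 1 + i) - F (s + 1 + i - 1)) = F (s + n) - F s := by
  induction n with
  | zero => simp
  | succ n ih =>
    rw [Finset.sum_range_succ, ih]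
    push_cast
    rw [show s + 1 + (n : ℝ) - 1 = s + n by ring, show s + 1 + (n : ℝ) = s + (n + 1) by ring]
    ring

lemma mu0_log (K : ℕ) (hK : 1 ≤ K) : ∃ C : ℝ, 0 ≤ C ∧ ∀ p n m : ℕ, 0 < p → p ≤ n → n + 2 ≤ m →
    0 < mu0 p n m ∧
    |Real.log (mu0 p n m) - (∑ j ∈ Finset.Icc 1 p, Real.log ((m : ℝ) * n - j) - p * Real.log n
      + (LL K ((m : ℝ) - p / n) - LL K m)
      - (LL K ((m : ℝ) - n - p / n) - LL K ((m : ℝ) - n)))|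
      ≤ n * (C / ((m : ℝ) - n) ^ (2 * K - 2)) := by
  obtain ⟨C, hC, H⟩ := QQ_bound K hK
  refine ⟨C, hC, fun p n m hp hpn hnm => ?_⟩
  have hp' : (0 : ℝ) < p := by exact_mod_cast hp
  have hn' : (0 : ℝ) < n := by exact_mod_cast (by omega : 0 < n)
  have hpn' : (p : ℝ) ≤ n := by exact_mod_cast hpn
  have hnm' : (n : ℝ) + 2 ≤ m := by exact_mod_cast hnm
  set h : ℝ := p / n with hh
  have h0 : 0 < h := by positivity
  have h1 : h ≤ 1 := by rw [hh, div_le_one hn']; exact hpn'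
  have hmn : (p : ℝ) < m * n := by nlinarith
  have gp : ∀ x : ℝ, 0 < x → 0 < Real.Gamma x := fun x hx => Real.Gamma_pos_of_pos hx
  have P1 : 0 < Real.Gamma ((m : ℝ) * n) := gp _ (by linarith)
  have P2 : 0 < Real.Gamma ((m : ℝ) * n - p) := gp _ (by linarith)
  have P3 : ∀ i : ℕ, 0 < Real.Gamma ((m : ℝ) - n + 1 - h + i) := fun i => gp _ (by
    have : (0 : ℝ) ≤ i := Nat.cast_nonneg i
    linarith)
  have P4 : ∀ i : ℕ, 0 < Real.Gamma ((m : ℝ) - n + 1 + i) := fun i => gp _ (by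
    have : (0 : ℝ) ≤ i := Nat.cast_nonneg i
    linarith)
  have P5 : ∀ i ∈ Finset.range n, 0 < Real.Gamma ((m : ℝ) - n + 1 - h + i) / Real.Gamma ((m : ℝ) - n + 1 + i) :=
    fun i _ => div_pos (P3 i) (P4 i)
  have P6 := Finset.prod_pos P5
  have P7 : 0 < Real.Gamma ((m : ℝ) * n) / ((n : ℝ) ^ p * Real.Gamma ((m : ℝ) * n - p)) := by positivity
  have hmu : mu0 p n m = Real.Gamma ((m : ℝ) * n) / ((n : ℝ) ^ p * Real.Gamma ((m : ℝ) * n - p)) *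
    ∏ i ∈ Finset.range n,
      Real.Gamma ((m : ℝ) - n + 1 - h + i) / Real.Gamma ((m : ℝ) - n + 1 + i) := rfl
  refine ⟨by rw [hmu]; exact mul_pos P7 P6, ?_⟩
  have hlog : Real.log (mu0 p n m) = ∑ j ∈ Finset.Icc 1 p, Real.log ((m : ℝ) * n - j) - p * Real.log n
      + ∑ i ∈ Finset.range n, (Real.log (Real.Gamma ((m : ℝ) - n + 1 - h + i))
        - Real.log (Real.Gamma ((m : ℝ) - n + 1 + i))) := by
    rw [hmu, Real.log_mul P7.ne' P6.ne', Real.log_prod (fun i hi => (P5 i hi).ne'),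
      Real.log_div P1.ne' (by positivity), Real.log_mul (by positivity) P2.ne', Real.log_pow,
      ← logGamma_sub_nat _ p hmn]
    rw [Finset.sum_congr rfl fun i _ => Real.log_div (P3 i).ne' (P4 i).ne']
    ring
  have t1 := tele (LL K) ((m : ℝ) - n) n
  have t2 := tele (LL K) ((m : ℝ) - n - h) n
  rw [show (m : ℝ) - n + n = m by ring] at t1
  rw [show (m : ℝ) - n - h + n = m - h by ring] at t2
  have e : Real.log (mu0 p n m) - (∑ j ∈ Finset.Icc 1 p, Real.log ((m : ℝ) * n - j) - p * Real.log n
      + (LL K ((m : ℝ) - h) - LL K m)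
      - (LL K ((m : ℝ) - n - h) - LL K ((m : ℝ) - n)))
      = - ∑ i ∈ Finset.range n, QQ K h ((m : ℝ) - n + 1 + i) := by
    have : ∑ i ∈ Finset.range n, QQ K h ((m : ℝ) - n + 1 + i)
      = -(∑ i ∈ Finset.range n, (Real.log (Real.Gamma ((m : ℝ) - n + 1 - h + i))
        - Real.log (Real.Gamma ((m : ℝ) - n + 1 + i))))
        - ∑ i ∈ Finset.range n, (LL K ((m : ℝ) - n + 1 + i) - LL K ((m : ℝ) - n + 1 + i - 1))
        + ∑ i ∈ Finset.range n, (LL K ((m : ℝ) - n - h + 1 + i) - LL K ((m : ℝ) - n - h + 1 + i - 1)) := by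
      rw [← Finset.sum_neg_distrib, ← Finset.sum_sub_distrib, ← Finset.sum_add_distrib]
      refine Finset.sum_congr rfl fun i _ => ?_
      unfold QQ
      rw [show (m : ℝ) - n + 1 + i - h = m - n + 1 - h + i by ring,
        show (m : ℝ) - n - h + 1 + i = m - n + 1 - h + i by ring]
      ring
    rw [this, t1, t2, hlog]
    ring
  rw [e, abs_neg]
  refine (Finset.abs_sum_le_sum_abs _ _).trans ?_
  refine (Finset.sum_le_card_nsmul _ _ (C / ((m : ℝ) - n) ^ (2 * K - 2)) ?_).trans ?_
  · intro i _
    have hi : (0 : ℝ) ≤ i := Nat.cast_nonneg i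
    refine (H _ h h0 h1 (by linarith)).trans ?_
    have : 0 < (m : ℝ) - n := by linarith
    have hle : (m : ℝ) - n ≤ (m : ℝ) - n + 1 + i - h := by linarith
    gcongr C / ?_ ^ (2 * K - 2)
  · simp

lemma rising_eq (a r : ℕ) (ha : 1 ≤ a) :
    risingFactorial a r / (Nat.factorial r) = ((r + (a - 1)).choose (a - 1) : ℝ) := by
  obtain ⟨a, rfl⟩ : ∃ k', a = k' + 1 := ⟨a - 1, by omega⟩
  have h1 : risingFactorial (a + 1) r = ((a + 1).ascFactorial r : ℕ) := by
    unfold risingFactorial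
    rw [Nat.ascFactorial_eq_prod_range]
    push_cast
    rfl
  rw [h1, Nat.ascFactorial_eq_factorial_mul_choose, Nat.add_sub_cancel]
  have : (r.factorial : ℝ) ≠ 0 := by positivity
  push_cast
  rw [mul_div_cancel_left₀ _ this, add_comm r a, Nat.choose_symm_add]

/-- Coefficients of one end of the telescoped sum. -/
noncomputable def gco (K p : ℕ) (g : ℝ) (q : ℕ) : ℝ :=
  -((p * g) ^ (q + 1) / g ^ 2 / (((q : ℝ) - 1) * q * (q + 1))) + (p * g) ^ q / (12 * q)
    + ∑ k ∈ Finset.Icc 1 K, bK k * g ^ (2 * k) *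
      (if k < q then ((q - k + (2 * k - 1)).choose (2 * k - 1) : ℝ) * (p * g) ^ (q - k) else 0)

/-- Generating function of `gco`. -/
noncomputable def GG (K p : ℕ) (g x : ℝ) : ℝ :=
  -(E3 (p * g * x) / (g ^ 2 * x)) - Real.log (1 - p * g * x) / 12
    + ∑ k ∈ Finset.Icc 1 K, bK k * (g ^ (2 * k) * x ^ k) * (1 / (1 - p * g * x) ^ (2 * k) - 1)

lemma hasSum_GG (K p : ℕ) (g x : ℝ) (hg : 0 < g) (hx : 0 < x) (hu : p * g * x < 1) :
    HasSum (fun q : ℕ => gco K p g q * x ^ q) (GG K p g x) := by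
  have hu0 : 0 ≤ p * g * x := by positivity
  have hu' : |p * g * x| < 1 := by rwa [abs_of_nonneg hu0]
  have a1 : HasSum (fun q : ℕ => -((p * g) ^ (q + 1) / g ^ 2 / (((q : ℝ) - 1) * q * (q + 1))) * x ^ q)
      (-(E3 (p * g * x) / (g ^ 2 * x))) := by
    have b := ((hasSum_E3 (p * g * x) hu').mul_right (1 / (g ^ 2 * x))).neg
    rw [← add_zero (-(E3 (p * g * x) / (g ^ 2 * x)))]
    have := (hasSum_nat_add_iff (f := fun q : ℕ =>
      -((p * g) ^ (q + 1) / g ^ 2 / (((q : ℝ) - 1) * q * (q + 1))) * x ^ q)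
      (g := -(E3 (p * g * x) / (g ^ 2 * x))) 2).1 (by
        refine b.conv (fun l => ?_) ?_
        · push_cast
          rw [show ((l : ℝ) + 2 - 1) = l + 1 by ring, show ((l : ℝ) + 2 + 1) = l + 3 by ring,
            mul_pow _ x (l + 3), show l + 2 + 1 = l + 3 by ring, show x ^ (l + 3) = x ^ (l + 2) * x by ring]
          field_simp
        · ring)
    refine this.conv (fun l => rfl) ?_
    simp [Finset.sum_range_succ]
  have a2 : HasSum (fun q : ℕ => (p * g) ^ q / (12 * q) * x ^ q) (-Real.log (1 - p * g * x) / 12) := by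
    have b := (Real.hasSum_pow_div_log_of_abs_lt_one hu').mul_right (1 / 12)
    have := (hasSum_nat_add_iff (f := fun q : ℕ => (p * g) ^ q / (12 * q) * x ^ q)
      (g := -Real.log (1 - p * g * x) / 12) 1).1 (by
        refine b.conv (fun l => ?_) ?_
        · push_cast
          rw [mul_pow _ x (l + 1)]
          field_simp
        · ring)
    refine this.conv (fun l => rfl) ?_
    simp
  have a3 : ∀ k ∈ Finset.Icc 1 K, HasSum (fun q : ℕ => bK k * g ^ (2 * k) *
      (if k < q then ((q - k + (2 * k - 1)).choose (2 * k - 1) : ℝ) * (p * g) ^ (q - k) else 0) * x ^ q)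
      (bK k * (g ^ (2 * k) * x ^ k) * (1 / (1 - p * g * x) ^ (2 * k) - 1)) := by
    intro k hk
    have hk1 := (Finset.mem_Icc.1 hk).1
    have b := hasSum_choose_mul_geometric_of_norm_lt_one (𝕜 := ℝ) (2 * k - 1) (r := p * g * x) (by simpa using hu')
    have b2 := hasSum_ite_eq (0 : ℕ) (1 : ℝ)
    have b3 := (b.sub b2).mul_left (bK k * (g ^ (2 * k) * x ^ k))
    have := (hasSum_nat_add_iff (f := fun q : ℕ => bK k * g ^ (2 * k) *
      (if k < q then ((q - k + (2 * k - 1)).choose (2 * k - 1) : ℝ) * (p * g) ^ (q - k) else 0) * x ^ q)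
      (g := (bK k * (g ^ (2 * k) * x ^ k) * (1 / (1 - p * g * x) ^ (2 * k) - 1))) k).1 (by
        refine b3.conv (fun l => ?_) ?_
        · rcases Nat.eq_zero_or_pos l with rfl | hl
          · simp
          · rw [if_pos (by omega), if_neg (by omega), Nat.add_sub_cancel, pow_add, mul_pow _ x]
            ring
        · rw [show 2 * k - 1 + 1 = 2 * k by omega])
    refine this.conv (fun l => rfl) ?_
    rw [Finset.sum_eq_zero, add_zero]
    intro i hi
    have := Finset.mem_range.1 hi
    rw [if_neg (by omega)]; simp
  refine ((a1.add a2).add (hasSum_sum a3)).conv (fun l => ?_) ?_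
  · unfold gco
    rw [add_mul, add_mul, Finset.sum_mul]
  · unfold GG; ring

/-- Coefficients of the expansion of `log mu0`. -/
noncomputable def Dco (K p : ℕ) (c : ℝ) (q : ℕ) : ℝ :=
  -(∑ j ∈ Finset.Icc 1 p, ((j : ℝ) * c) ^ q / q) + gco K p c q - gco K p (c / (1 - c)) q

lemma Dco_zero (K p : ℕ) (c : ℝ) : Dco K p c 0 = 0 := by
  simp [Dco, gco]

lemma Dco_one (K p : ℕ) (c : ℝ) (hc1 : c < 1) :
    Dco K p c 1 = Acoef p c 1 + (p : ℝ) ^ 2 / 2 * Real.log (1 - c) := by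
  have h0 : ∀ g : ℝ, ∑ k ∈ Finset.Icc 1 K, bK k * g ^ (2 * k) *
      (if k < 1 then ((1 - k + (2 * k - 1)).choose (2 * k - 1) : ℝ) * (p * g) ^ (1 - k) else 0) = 0 := by
    intro g
    refine Finset.sum_eq_zero fun k hk => ?_
    rw [if_neg (by have := (Finset.mem_Icc.1 hk).1; omega)]; simp
  have hs : ∑ j ∈ Finset.Icc 1 p, ((j : ℝ) * c) ^ 1 / ((1 : ℕ) : ℝ) = c * (p * (p + 1) / 2) := by
    clear h0
    induction p with
    | zero => simp
    | succ p ih => rw [Finset.sum_Icc_succ_top (by omega), ih]; push_cast; ring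
  have h1 : 0 < 1 - c := by linarith
  have h2 : c - 1 ≠ 0 := by linarith
  unfold Dco gco
  rw [h0, h0, hs]
  simp only [Acoef, Nat.cast_one, sub_self, zero_mul, div_zero]
  rw [show c - 1 = -(1 - c) by ring]
  field_simp
  ring

lemma Dco_eq (K p : ℕ) (c : ℝ) (hc : 0 < c) (hc1 : c < 1) (Q : ℕ) (hQ : Q + 1 ≤ K) :
    Dco K p c (Q + 2) = Acoef p c (Q + 2) := by
  have h1 : 0 < 1 - c := by linarith
  have hsum : ∀ g : ℝ, ∑ k ∈ Finset.Icc 1 K, bK k * g ^ (2 * k) *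
      (if k < Q + 2 then ((Q + 2 - k + (2 * k - 1)).choose (2 * k - 1) : ℝ) * (p * g) ^ (Q + 2 - k) else 0)
      = ∑ k ∈ Finset.Icc 1 (Q + 1), bK k * g ^ (2 * k) *
        (((Q + 2 - k + (2 * k - 1)).choose (2 * k - 1) : ℝ) * (p * g) ^ (Q + 2 - k)) := by
    intro g
    symm
    refine Finset.sum_subset_zero_on_sdiff ?_ ?_ ?_
    · intro k hk; simp at hk ⊢; omega
    · intro k hk
      simp at hk
      rw [if_neg (by omega)]; simp
    · intro k hk
      simp at hk
      rw [if_pos (by omega)]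
  have hfin : ∑ k ∈ Finset.Icc 1 (Q + 1), bK k * c ^ (2 * k) *
        (((Q + 2 - k + (2 * k - 1)).choose (2 * k - 1) : ℝ) * (p * c) ^ (Q + 2 - k))
      - ∑ k ∈ Finset.Icc 1 (Q + 1), bK k * (c / (1 - c)) ^ (2 * k) *
        (((Q + 2 - k + (2 * k - 1)).choose (2 * k - 1) : ℝ) * (p * (c / (1 - c))) ^ (Q + 2 - k))
      = ∑ j ∈ Finset.Icc 1 (Q + 1),
            (bernoulli (2 * j + 2) : ℝ) * c ^ (2 * j) * risingFactorial (2 * j) (Q + 2 - j)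
              * (p * c) ^ (Q + 2 - j)
              / (4 * j * (j + 1) * (Nat.factorial (Q + 2 - j)))
              * (1 - (1 - c) ^ (-(j : ℤ) - (Q + 2 : ℤ))) := by
    rw [← Finset.sum_sub_distrib]
    refine Finset.sum_congr rfl fun k hk => ?_
    have hk1 := Finset.mem_Icc.1 hk
    rw [← rising_eq (2 * k) (Q + 2 - k) (by omega)]
    have hz : (1 - c) ^ (-(k : ℤ) - (Q + 2 : ℤ)) = 1 / ((1 - c) ^ (2 * k) * (1 - c) ^ (Q + 2 - k)) := by
      rw [← pow_add, one_div, ← zpow_natCast, ← zpow_neg]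
      congr 1
      have : 2 * k + (Q + 2 - k) = Q + 2 + k := by omega
      rw [this]; push_cast; ring
    rw [hz, div_pow, mul_pow, mul_pow, div_pow]
    unfold bK
    have : (k : ℝ) ≠ 0 := by
      have : k ≠ 0 := by omega
      exact_mod_cast this
    field_simp
  have hj : ∑ j ∈ Finset.Icc 1 p, ((j : ℝ) * c) ^ (Q + 2) / ((Q + 2 : ℕ) : ℝ)
      = (c ^ (Q + 2) / ((Q + 2 : ℕ) : ℝ)) * ∑ j ∈ Finset.Icc 1 p, (j : ℝ) ^ (Q + 2) := by
    rw [Finset.mul_sum]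
    refine Finset.sum_congr rfl fun j _ => ?_
    rw [mul_pow]; ring
  unfold Dco gco
  rw [hsum, hsum, hj]
  simp only [Acoef]
  rw [← hfin]
  set S1 := ∑ k ∈ Finset.Icc 1 (Q + 1), bK k * c ^ (2 * k) *
        (((Q + 2 - k + (2 * k - 1)).choose (2 * k - 1) : ℝ) * (p * c) ^ (Q + 2 - k))
  set S2 := ∑ k ∈ Finset.Icc 1 (Q + 1), bK k * (c / (1 - c)) ^ (2 * k) *
        (((Q + 2 - k + (2 * k - 1)).choose (2 * k - 1) : ℝ) * (p * (c / (1 - c))) ^ (Q + 2 - k))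
  set S3 := (c ^ (Q + 2) / ((Q + 2 : ℕ) : ℝ)) * ∑ j ∈ Finset.Icc 1 p, (j : ℝ) ^ (Q + 2)
  have hq1 : ((Q + 2 : ℕ) : ℝ) ^ 2 - 1 = (Q + 1) * (Q + 3) := by push_cast; ring
  have hq2 : ((Q + 2 : ℕ) : ℝ) - 1 = Q + 1 := by push_cast; ring
  have hq3 : ((Q + 2 : ℕ) : ℝ) + 1 = Q + 3 := by push_cast; ring
  have e1 : -((p * c) ^ (Q + 2 + 1) / c ^ 2 / ((((Q + 2 : ℕ) : ℝ) - 1) * ((Q + 2 : ℕ) : ℝ) * (((Q + 2 : ℕ) : ℝ) + 1)))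
       + (p * c) ^ (Q + 2) / (12 * ((Q + 2 : ℕ) : ℝ))
       = (c * p) ^ (Q + 2) * (-12 * p + c * (((Q + 2 : ℕ) : ℝ) ^ 2 - 1))
          / (12 * c * ((Q + 2 : ℕ) : ℝ) * (((Q + 2 : ℕ) : ℝ) ^ 2 - 1)) := by
    rw [hq1, hq2, hq3, pow_succ _ (Q + 2), mul_comm c (p : ℝ)]
    push_cast
    field_simp
  have e2 : -((p * (c / (1 - c))) ^ (Q + 2 + 1) / (c / (1 - c)) ^ 2 / ((((Q + 2 : ℕ) : ℝ) - 1) * ((Q + 2 : ℕ) : ℝ) * (((Q + 2 : ℕ) : ℝ) + 1)))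
       + (p * (c / (1 - c))) ^ (Q + 2) / (12 * ((Q + 2 : ℕ) : ℝ))
       = -((c * p) ^ (Q + 2) * (c + 12 * p - 12 * c * p - c * ((Q + 2 : ℕ) : ℝ) ^ 2)
          / (12 * c * ((Q + 2 : ℕ) : ℝ) * (((Q + 2 : ℕ) : ℝ) ^ 2 - 1) * (1 - c) ^ (Q + 2))) := by
    rw [show c + 12 * p - 12 * c * p - c * ((Q + 2 : ℕ) : ℝ) ^ 2
      = 12 * p * (1 - c) - c * (((Q + 2 : ℕ) : ℝ) ^ 2 - 1) by ring]
    rw [hq1, hq2, hq3, pow_succ _ (Q + 2), ← mul_div_assoc, div_pow, mul_comm c (p : ℝ)]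
    push_cast
    field_simp
    ring
  rw [e1, e2]
  ring

/-- Extension of a tuple by zero. -/
def extF {a b : ℕ} (f : Fin a → Fin b) : ℕ → ℕ := fun r => if h : r < a then (f ⟨r, h⟩).1 else 0

/-- Transport of tuples. -/
def trF (a b : ℕ) (f : Fin a → Fin (a + 1)) : Fin b → Fin (b + 1) :=
  fun r => ⟨min (extF f r.1) b, by omega⟩

lemma extF_apply {a b : ℕ} (f : Fin a → Fin b) (r : Fin a) : extF f r.1 = (f r).1 := by
  simp [extF]

lemma extF_inj {a b : ℕ} (f g : Fin a → Fin b) (h : extF f = extF g) : f = g := by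
  funext r
  have := congrFun h r.1
  rw [extF_apply, extF_apply] at this
  exact Fin.ext this

lemma extF_le {a j : ℕ} (f : Fin a → Fin (a + 1)) (h : ∑ r : Fin a, (r.1 + 1) * (f r).1 = j) (r : ℕ) :
    (r + 1) * extF f r ≤ j := by
  by_cases hr : r < a
  · rw [← h]
    have := Finset.single_le_sum (f := fun r : Fin a => (r.1 + 1) * (f r).1) (s := Finset.univ)
      (fun _ _ => Nat.zero_le _) (Finset.mem_univ (⟨r, hr⟩ : Fin a))
    simpa [extF, hr] using this
  · simp [extF, hr]

lemma extF_zero {a j : ℕ} (f : Fin a → Fin (a + 1)) (h : ∑ r : Fin a, (r.1 + 1) * (f r).1 = j) (r : ℕ)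
    (hr : j ≤ r) : extF f r = 0 := by
  have := extF_le f h r
  by_contra h0
  have : 1 ≤ extF f r := by omega
  nlinarith

lemma extF_tr {a b j : ℕ} (f : Fin a → Fin (a + 1)) (h : ∑ r : Fin a, (r.1 + 1) * (f r).1 = j)
    (hb : j ≤ b) : extF (trF a b f) = extF f := by
  funext r
  by_cases hr : r < b
  · have := extF_le f h r
    have h2 : extF f r ≤ b := by nlinarith
    conv_lhs => unfold extF
    simp [hr, trF, h2]
  · rw [extF_zero f h r (by omega)]
    simp [extF, hr]

lemma wt_ext {a j : ℕ} (f : Fin a → Fin (a + 1)) (hz : ∀ r, j ≤ r → extF f r = 0) (ha : j ≤ a) :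
    ∑ r : Fin a, (r.1 + 1) * (f r).1 = ∑ r ∈ Finset.range j, (r + 1) * extF f r := by
  rw [Finset.sum_subset (Finset.range_mono ha) (fun r _ hr => by
    rw [hz r (by simpa using hr), mul_zero]), ← Fin.sum_univ_eq_sum_range (fun r => (r + 1) * extF f r)]
  simp [extF_apply]

lemma coef_ext {a j : ℕ} (A : ℕ → ℝ) (f : Fin a → Fin (a + 1)) (hz : ∀ r, j ≤ r → extF f r = 0) (ha : j ≤ a) :
    ∏ r : Fin a, A (r.1 + 1) ^ (f r).1 / (Nat.factorial (f r).1)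
      = ∏ r ∈ Finset.range j, A (r + 1) ^ (extF f r) / (Nat.factorial (extF f r)) := by
  rw [Finset.prod_subset (Finset.range_mono ha) (fun r _ hr => by
    rw [hz r (by simpa using hr)]; simp),
    ← Fin.prod_univ_eq_prod_range (fun r => A (r + 1) ^ (extF f r) / (Nat.factorial (extF f r) : ℝ))]
  simp [extF_apply]

/-- Weight-`j` part of the exponential. -/
noncomputable def bco (A : ℕ → ℝ) (a j : ℕ) : ℝ :=
  ∑ i ∈ Finset.univ.filter
        (fun i : Fin a → Fin (a + 1) => ∑ r : Fin a, (r.1 + 1) * (i r).1 = j),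
      ∏ r : Fin a, (A (r.1 + 1)) ^ (i r).1 / (Nat.factorial (i r).1)

lemma bco_eq (A : ℕ → ℝ) (N j : ℕ) (hj : j ≤ N) : bco A N j = bco A j j := by
  have tr_mem : ∀ a b : ℕ, j ≤ a → j ≤ b → ∀ f : Fin a → Fin (a + 1),
      (∑ r : Fin a, (r.1 + 1) * (f r).1 = j) →
      (∑ r : Fin b, (r.1 + 1) * (trF a b f r).1 = j) := by
    intro a b ha hb f hf
    have e := extF_tr f hf hb
    have hz := extF_zero f hf
    rw [wt_ext (j := j) _ (by rw [e]; exact hz) hb, e, ← wt_ext f hz ha, hf]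
  unfold bco
  refine Finset.sum_nbij' (trF N j) (trF j N) ?_ ?_ ?_ ?_ ?_
  · intro f hf
    simp only [Finset.mem_filter, Finset.mem_univ, true_and] at hf ⊢
    exact tr_mem N j hj le_rfl f hf
  · intro f hf
    simp only [Finset.mem_filter, Finset.mem_univ, true_and] at hf ⊢
    exact tr_mem j N le_rfl hj f hf
  · intro f hf
    simp only [Finset.mem_filter, Finset.mem_univ, true_and] at hf
    apply extF_inj
    rw [extF_tr _ (tr_mem N j hj le_rfl f hf) hj, extF_tr f hf le_rfl]
  · intro f hf
    simp only [Finset.mem_filter, Finset.mem_univ, true_and] at hf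
    apply extF_inj
    rw [extF_tr _ (tr_mem j N le_rfl hj f hf) le_rfl, extF_tr f hf hj]
  · intro f hf
    simp only [Finset.mem_filter, Finset.mem_univ, true_and] at hf
    have e := extF_tr f hf (le_refl j)
    have hz := extF_zero f hf
    rw [coef_ext A f hz hj, coef_ext (j := j) A (trF N j f) (by rw [e]; exact hz) le_rfl, e]

section Asym

open Filter Topology Asymptotics

lemma prod_isBigO {ι : Type*} {l : Filter ℕ} (φ : ℕ → ℝ) (f g : ι → ℕ → ℝ) (s : Finset ι)
    (h : ∀ i ∈ s, (fun t => f i t - g i t) =O[l] φ)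
    (hf : ∀ i ∈ s, f i =O[l] (fun _ => (1 : ℝ))) (hg : ∀ i ∈ s, g i =O[l] (fun _ => (1 : ℝ))) :
    ((fun t => ∏ i ∈ s, f i t - ∏ i ∈ s, g i t) =O[l] φ) ∧
      (fun t => ∏ i ∈ s, f i t) =O[l] (fun _ => (1 : ℝ)) := by
  classical
  induction s using Finset.induction_on with
  | empty =>
    simp only [Finset.prod_empty, sub_self]
    exact ⟨isBigO_zero _ _, isBigO_refl _ _⟩
  | insert i s hi ih =>
    have ih' := ih (fun j hj => h j (Finset.mem_insert_of_mem hj))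
      (fun j hj => hf j (Finset.mem_insert_of_mem hj)) (fun j hj => hg j (Finset.mem_insert_of_mem hj))
    have h1 := h i (Finset.mem_insert_self _ _)
    have h2 := hf i (Finset.mem_insert_self _ _)
    have h3 := hg i (Finset.mem_insert_self _ _)
    simp only [Finset.prod_insert hi]
    refine ⟨?_, by simpa using h2.mul ih'.2⟩
    have e1 := h1.mul ih'.2
    have e2 := h3.mul ih'.1
    simp only [mul_one, one_mul] at e1 e2
    refine (e1.add e2).congr_left fun t => ?_
    ring

lemma pow_isBigO {l : Filter ℕ} (x : ℕ → ℝ) (hx : Tendsto x l (𝓝 0)) (m k : ℕ) (h : k ≤ m) :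
    (fun t => x t ^ m) =O[l] (fun t => x t ^ k) := by
  have h1 : (fun t => x t ^ (m - k)) =O[l] (fun _ => (1 : ℝ)) := (hx.pow (m - k)).isBigO_one ℝ
  have := h1.mul (isBigO_refl (fun t => x t ^ k) l)
  simpa only [one_mul, ← pow_add, Nat.sub_add_cancel h] using this

lemma expo_expand (A : ℕ → ℝ) (N : ℕ) {l : Filter ℕ} (x y : ℕ → ℝ) (hx : Tendsto x l (𝓝 0))
    (hy : (fun t => y t - ∑ r : Fin N, A (r.1 + 1) * x t ^ (r.1 + 1)) =O[l] (fun t => x t ^ (N + 1))) :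
    (fun t => Real.exp (y t) - ∑ j ∈ Finset.range (N + 1), bco A j j * x t ^ j)
      =O[l] (fun t => x t ^ (N + 1)) := by
  have hxp : Tendsto (fun t => x t ^ (N + 1)) l (𝓝 0) := by
    simpa using hx.pow (N + 1)
  set v : Fin N → ℕ → ℝ := fun r t => A (r.1 + 1) * x t ^ (r.1 + 1) with hv
  have hv0 : ∀ r, Tendsto (v r) l (𝓝 0) := fun r => by
    simpa using (hx.pow (r.1 + 1)).const_mul (A (r.1 + 1))
  set P : Fin N → ℕ → ℝ := fun r t => ∑ i ∈ Finset.range (N + 1), v r t ^ i / (Nat.factorial i) with hP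
  have hPr := prod_isBigO (l := l) (fun t => x t ^ (N + 1)) (fun r t => Real.exp (v r t)) P Finset.univ
    (by
      intro r _
      have b1 : (fun t => Real.exp (v r t) - P r t) =O[l] (fun t => v r t ^ (N + 1)) := by
        refine IsBigO.of_bound (((N + 1).succ : ℝ) / ((N + 1).factorial * ((N + 1 : ℕ) : ℝ))) ?_
        have : ∀ᶠ t in l, |v r t| ≤ 1 := by
          have := (hv0 r).abs
          rw [abs_zero] at this
          exact this.eventually_le_const one_pos
        filter_upwards [this] with t ht
        have := Real.exp_bound ht (n := N + 1) (by omega)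
        rw [Real.norm_eq_abs, Real.norm_eq_abs, abs_pow, mul_comm]
        exact this
      refine b1.trans ?_
      have : (fun t => v r t ^ (N + 1)) = fun t => A (r.1 + 1) ^ (N + 1) * x t ^ ((r.1 + 1) * (N + 1)) := by
        funext t; simp only [hv]; rw [mul_pow, ← pow_mul]
      rw [this]
      exact (pow_isBigO x hx _ _ (by nlinarith)).const_mul_left _)
    (fun r _ => ((Real.continuous_exp.tendsto 0).comp (hv0 r)).isBigO_one ℝ)
    (by
      intro r _
      refine IsBigO.fun_sum fun i _ => ?_
      exact (((hv0 r).pow i).div_const _).isBigO_one ℝ)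
  -- step 1
  set e : ℕ → ℝ := fun t => y t - ∑ r : Fin N, v r t with he
  have he0 : Tendsto e l (𝓝 0) := hy.trans_tendsto hxp
  have s1 : (fun t => Real.exp (y t) - ∏ r : Fin N, Real.exp (v r t)) =O[l] (fun t => x t ^ (N + 1)) := by
    have q : (fun t => Real.exp (e t) - 1) =O[l] (fun t => x t ^ (N + 1)) := by
      refine IsBigO.trans ?_ hy
      refine IsBigO.of_bound 2 ?_
      have : ∀ᶠ t in l, |e t| ≤ 1 := by
        have := he0.abs
        rw [abs_zero] at this
        exact this.eventually_le_const one_pos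
      filter_upwards [this] with t ht
      exact Real.abs_exp_sub_one_le ht
    have := hPr.2.mul q
    simp only [one_mul] at this
    refine this.congr_left fun t => ?_
    rw [← Real.exp_sum, mul_sub, mul_one, ← Real.exp_add]
    simp only [he]
    congr 2
    ring
  -- step 3
  have s3 : (fun t => ∏ r : Fin N, P r t - ∑ j ∈ Finset.range (N + 1), bco A j j * x t ^ j)
      =O[l] (fun t => x t ^ (N + 1)) := by
    set wt : (Fin N → Fin (N + 1)) → ℕ := fun f => ∑ r : Fin N, (r.1 + 1) * (f r).1 with hwt
    set co : (Fin N → Fin (N + 1)) → ℝ :=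
      fun f => ∏ r : Fin N, (A (r.1 + 1)) ^ (f r).1 / (Nat.factorial (f r).1) with hco
    have expd : ∀ t, ∏ r : Fin N, P r t = ∑ f : Fin N → Fin (N + 1), co f * x t ^ wt f := by
      intro t
      have : ∀ r, P r t = ∑ i : Fin (N + 1), v r t ^ i.1 / (Nat.factorial i.1) := by
        intro r
        simp only [hP]
        rw [Fin.sum_univ_eq_sum_range (fun i => v r t ^ i / (Nat.factorial i : ℝ))]
      simp only [this]
      rw [Finset.prod_univ_sum, Fintype.piFinset_univ]
      refine Finset.sum_congr rfl fun f _ => ?_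
      simp only [hco, hwt, hv]
      rw [← Finset.prod_pow_eq_pow_sum, ← Finset.prod_mul_distrib]
      refine Finset.prod_congr rfl fun r _ => ?_
      rw [mul_pow, ← pow_mul]; ring
    have low : ∀ t, ∑ j ∈ Finset.range (N + 1), bco A j j * x t ^ j
        = ∑ f ∈ Finset.univ.filter (fun f => wt f < N + 1), co f * x t ^ wt f := by
      intro t
      rw [← Finset.sum_fiberwise_of_maps_to (t := Finset.range (N + 1)) (g := wt) (by
        intro f hf; simpa using hf)]
      refine Finset.sum_congr rfl fun j hj => ?_
      have hj' := Finset.mem_range.1 hj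
      rw [← bco_eq A N j (by omega), bco, Finset.sum_mul, Finset.filter_filter]
      refine Finset.sum_congr ?_ ?_
      · ext f
        simp only [Finset.mem_filter, Finset.mem_univ, true_and, hwt]
        constructor
        · intro h; exact ⟨by omega, h⟩
        · intro h; exact h.2
      · intro f hf
        simp only [Finset.mem_filter, Finset.mem_univ, true_and] at hf
        rw [hf.2]
    have : ∀ t, ∏ r : Fin N, P r t - ∑ j ∈ Finset.range (N + 1), bco A j j * x t ^ j
        = ∑ f ∈ Finset.univ.filter (fun f => ¬ wt f < N + 1), co f * x t ^ wt f := by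
      intro t
      rw [expd, low, ← Finset.sum_filter_add_sum_filter_not Finset.univ (fun f => wt f < N + 1)]
      ring
    simp only [this]
    refine IsBigO.fun_sum fun f hf => ?_
    simp only [Finset.mem_filter, Finset.mem_univ, true_and, not_lt] at hf
    exact (pow_isBigO x hx _ _ hf).const_mul_left _
  refine ((s1.add hPr.1).add s3).congr_left fun t => ?_
  ring

lemma LL_end (K p n : ℕ) (g z : ℝ) (hn : 0 < n) (hg : 0 < g) (hz : z = n / g)
    (hu : p * g * (1 / (n : ℝ) ^ 2) < 1) :
    LL K (z - p / n) - LL K z = ((p : ℝ) ^ 2 * (1 / (n : ℝ) ^ 2) / 2 - p / g) * Real.log z + p / g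
      + GG K p g (1 / (n : ℝ) ^ 2) := by
  have hn' : (0 : ℝ) < n := by exact_mod_cast hn
  have hz0 : 0 < z := by rw [hz]; positivity
  have e := LL_diff K z (p * g * (1 / (n : ℝ) ^ 2)) hz0 hu
  have e1 : z * (1 - p * g * (1 / (n : ℝ) ^ 2)) = z - p / n := by
    rw [hz]; field_simp
  have e2 : z ^ 2 * ((p * g * (1 / (n : ℝ) ^ 2)) ^ 2 / 2 - p * g * (1 / (n : ℝ) ^ 2))
    = (p : ℝ) ^ 2 * (1 / (n : ℝ) ^ 2) / 2 - p / g := by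
    rw [hz]; field_simp
  have e3 : z ^ 2 * (p * g * (1 / (n : ℝ) ^ 2)) = p / g := by
    rw [hz]; field_simp
  have e4 : z ^ 2 * E3 (p * g * (1 / (n : ℝ) ^ 2))
      = E3 (p * g * (1 / (n : ℝ) ^ 2)) / (g ^ 2 * (1 / (n : ℝ) ^ 2)) := by
    rw [hz]; field_simp
  have e5 : ∑ k ∈ Finset.Icc 1 K, bK k * (1 / z ^ (2 * k))
        * (1 / (1 - p * g * (1 / (n : ℝ) ^ 2)) ^ (2 * k) - 1)
      = ∑ k ∈ Finset.Icc 1 K, bK k * (g ^ (2 * k) * (1 / (n : ℝ) ^ 2) ^ k)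
        * (1 / (1 - p * g * (1 / (n : ℝ) ^ 2)) ^ (2 * k) - 1) := by
    refine Finset.sum_congr rfl fun k _ => ?_
    congr 2
    rw [hz, div_pow, div_pow, one_pow, ← pow_mul]
    field_simp
  rw [e1, e2, e3, e4, e5] at e
  rw [e]
  unfold GG
  ring

/-- The convergent part of the expansion of `log mu0`. -/
noncomputable def PhiF (K p : ℕ) (c x : ℝ) : ℝ :=
  ∑ j ∈ Finset.Icc 1 p, Real.log (1 - j * c * x) + GG K p c x - GG K p (c / (1 - c)) x
    - (p : ℝ) ^ 2 / 2 * Real.log (1 - c) * x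

/-- Coefficients of `PhiF`. -/
noncomputable def Dco' (K p : ℕ) (c : ℝ) (q : ℕ) : ℝ :=
  Dco K p c q - if q = 1 then (p : ℝ) ^ 2 / 2 * Real.log (1 - c) else 0

lemma Dco'_zero (K p : ℕ) (c : ℝ) : Dco' K p c 0 = 0 := by simp [Dco', Dco_zero]

lemma Dco'_succ (K p : ℕ) (c : ℝ) (hc : 0 < c) (hc1 : c < 1) (r : ℕ) (hr : r ≤ K) :
    Dco' K p c (r + 1) = Acoef p c (r + 1) := by
  unfold Dco'
  rcases r with _ | r
  · rw [Dco_one K p c hc1]; simp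
  · rw [Dco_eq K p c hc hc1 r hr]; simp

lemma hasSum_PhiF (K p : ℕ) (hp : 0 < p) (c : ℝ) (hc : 0 < c) (hc1 : c < 1) (x : ℝ) (hx : 0 < x)
    (hx1 : x < 1 / (p * (c / (1 - c)))) :
    HasSum (fun q => Dco' K p c q * x ^ q) (PhiF K p c x) := by
  have h1 : 0 < 1 - c := by linarith
  have hp' : (0 : ℝ) < p := by exact_mod_cast hp
  have hg : 0 < c / (1 - c) := by positivity
  have hcg : c ≤ c / (1 - c) := by rw [le_div_iff₀ h1]; nlinarith
  have u2 : p * (c / (1 - c)) * x < 1 := by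
    rw [lt_div_iff₀ (by positivity)] at hx1; linarith
  have u1 : p * c * x < 1 := lt_of_le_of_lt (by gcongr) u2
  have b1 := hasSum_GG K p c x hc hx u1
  have b2 := hasSum_GG K p (c / (1 - c)) x hg hx u2
  have b3 : ∀ j ∈ Finset.Icc 1 p, HasSum (fun q : ℕ => -(((j : ℝ) * c) ^ q / q) * x ^ q)
      (Real.log (1 - j * c * x)) := by
    intro j hj
    have hj1 : (j : ℝ) ≤ p := by exact_mod_cast (Finset.mem_Icc.1 hj).2
    have hu : |(j : ℝ) * c * x| < 1 := by
      rw [abs_of_nonneg (by positivity)]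
      exact lt_of_le_of_lt (by gcongr) u1
    have := (hasSum_nat_add_iff (f := fun q : ℕ => -(((j : ℝ) * c) ^ q / q) * x ^ q)
      (g := Real.log (1 - j * c * x)) 1).1 (by
        refine (Real.hasSum_pow_div_log_of_abs_lt_one hu).neg.conv (fun l => ?_) (by ring)
        rw [mul_pow _ x]; push_cast; ring)
    refine this.conv (fun l => rfl) ?_
    simp
  have b4 := hasSum_ite_eq (1 : ℕ) ((p : ℝ) ^ 2 / 2 * Real.log (1 - c) * x)
  refine ((((hasSum_sum b3).add b1).sub b2).sub b4).conv (fun q => ?_) rfl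
  unfold Dco' Dco
  have : ∑ j ∈ Finset.Icc 1 p, -(((j : ℝ) * c) ^ q / q) * x ^ q
    = -(∑ j ∈ Finset.Icc 1 p, ((j : ℝ) * c) ^ q / q) * x ^ q := by
    rw [← Finset.sum_mul, Finset.sum_neg_distrib]
  rw [this]
  by_cases hq : q = 1
  · subst hq; simp; ring
  · simp only [if_neg hq]; ring

lemma approx_eq (K p n m : ℕ) (c : ℝ) (hc : 0 < c) (hc1 : c < 1) (hn : 0 < n)
    (hm : (m : ℝ) = n / c) (hu : p * (c / (1 - c)) * (1 / (n : ℝ) ^ 2) < 1) :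
    ∑ j ∈ Finset.Icc 1 p, Real.log ((m : ℝ) * n - j) - p * Real.log n
      + (LL K ((m : ℝ) - p / n) - LL K m)
      - (LL K ((m : ℝ) - n - p / n) - LL K ((m : ℝ) - n))
    = Acoef p c 0 + PhiF K p c (1 / (n : ℝ) ^ 2) := by
  have h1 : 0 < 1 - c := by linarith
  have hn' : (0 : ℝ) < n := by exact_mod_cast hn
  have hg : 0 < c / (1 - c) := by positivity
  have hcg : c ≤ c / (1 - c) := by rw [le_div_iff₀ h1]; nlinarith
  have u1 : p * c * (1 / (n : ℝ) ^ 2) < 1 := lt_of_le_of_lt (by gcongr) hu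
  have hmn : (m : ℝ) - n = n / (c / (1 - c)) := by rw [hm]; field_simp
  rw [LL_end K p n c m hn hc hm u1, LL_end K p n (c / (1 - c)) (m - n) hn hg hmn hu]
  have l1 : Real.log m = Real.log n - Real.log c := by rw [hm, Real.log_div hn'.ne' hc.ne']
  have l2 : Real.log ((m : ℝ) - n) = Real.log n - Real.log c + Real.log (1 - c) := by
    rw [hmn, Real.log_div hn'.ne' hg.ne', Real.log_div hc.ne' h1.ne']; ring
  have l3 : ∑ j ∈ Finset.Icc 1 p, Real.log ((m : ℝ) * n - j)
      = p * (2 * Real.log n - Real.log c) + ∑ j ∈ Finset.Icc 1 p, Real.log (1 - j * c * (1 / (n : ℝ) ^ 2)) := by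
    have : ∀ j ∈ Finset.Icc 1 p, Real.log ((m : ℝ) * n - j)
        = (2 * Real.log n - Real.log c) + Real.log (1 - j * c * (1 / (n : ℝ) ^ 2)) := by
      intro j hj
      have hj1 : (j : ℝ) ≤ p := by exact_mod_cast (Finset.mem_Icc.1 hj).2
      have hpos : 0 < 1 - j * c * (1 / (n : ℝ) ^ 2) := by
        have : j * c * (1 / (n : ℝ) ^ 2) ≤ p * c * (1 / (n : ℝ) ^ 2) := by gcongr
        linarith
      have : (m : ℝ) * n - j = (n : ℝ) ^ 2 / c * (1 - j * c * (1 / (n : ℝ) ^ 2)) := by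
        rw [hm]; field_simp
      rw [this, Real.log_mul (by positivity) hpos.ne', Real.log_div (by positivity) hc.ne', Real.log_pow]
      push_cast; ring
    rw [Finset.sum_congr rfl this, Finset.sum_add_distrib]
    simp
    ring
  rw [l1, l2, l3]
  simp only [Acoef, PhiF]
  generalize (∑ j ∈ Finset.Icc 1 p, Real.log (1 - j * c * (1 / (n : ℝ) ^ 2))) = S1
  generalize GG K p c (1 / (n : ℝ) ^ 2) = G1
  generalize GG K p (c / (1 - c)) (1 / (n : ℝ) ^ 2) = G2
  generalize Real.log (1 - c) = L1
  generalize Real.log c = L2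
  generalize Real.log n = L3
  field_simp
  ring

lemma log_expand (p : ℕ) (hp : 0 < p) (a b : ℕ) (ha : 0 < a) (hab : a < b) (N : ℕ) :
    (∀ᶠ t : ℕ in atTop, 0 < mu0 p (a * t) (b * t)) ∧
    (fun t : ℕ => (Real.log (mu0 p (a * t) (b * t)) - Acoef p ((a : ℝ) / b) 0)
      - ∑ r : Fin N, Acoef p ((a : ℝ) / b) (r.1 + 1) * (1 / ((a * t : ℕ) : ℝ) ^ 2) ^ (r.1 + 1))
      =O[atTop] (fun t : ℕ => (1 / ((a * t : ℕ) : ℝ) ^ 2) ^ (N + 1)) := by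
  have ha' : (0 : ℝ) < a := by exact_mod_cast ha
  have hab' : (a : ℝ) < b := by exact_mod_cast hab
  have hb' : (0 : ℝ) < b := by linarith
  set c : ℝ := (a : ℝ) / b with hcdef
  have hc : 0 < c := by positivity
  have hc1 : c < 1 := by rw [hcdef, div_lt_one hb']; exact hab'
  have h1 : 0 < 1 - c := by linarith
  have hp' : (0 : ℝ) < p := by exact_mod_cast hp
  set K := N + 3 with hK
  obtain ⟨C1, hC1, H1⟩ := mu0_log K (by omega)
  set ρ : ℝ := 1 / (p * (c / (1 - c))) with hρ
  have hρ0 : 0 < ρ := by positivity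
  obtain ⟨C2, hC2, H2⟩ := tail_bound (Dco' K p c) (PhiF K p c) ρ hρ0
    (fun y hy hy1 => hasSum_PhiF K p hp c hc hc1 y hy hy1) (N + 1)
  -- eventual conditions
  have hnat : Tendsto (fun t : ℕ => ((a * t : ℕ) : ℝ)) atTop atTop := by
    push_cast
    exact tendsto_natCast_atTop_atTop.const_mul_atTop ha'
  have hx0 : Tendsto (fun t : ℕ => 1 / ((a * t : ℕ) : ℝ) ^ 2) atTop (𝓝 0) :=
    tendsto_const_nhds.div_atTop ((tendsto_pow_atTop (by norm_num)).comp hnat)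
  have ev1 : ∀ᶠ t : ℕ in atTop, 1 / ((a * t : ℕ) : ℝ) ^ 2 < ρ / 2 :=
    hx0.eventually_lt_const (by positivity)
  have ev2 : ∀ᶠ t : ℕ in atTop, p ≤ a * t ∧ a * t + 2 ≤ b * t := by
    filter_upwards [eventually_ge_atTop (p + 2)] with t ht
    constructor <;> nlinarith
  refine ⟨?_, ?_⟩
  · filter_upwards [ev2] with t ht
    exact (H1 p (a * t) (b * t) hp ht.1 ht.2).1
  · refine IsBigO.of_bound (C1 / ((1 - c) / c) ^ (2 * K - 2) + C2) ?_
    filter_upwards [ev1, ev2] with t ht1 ht2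
    have hn0 : 0 < a * t := by omega
    have b1 := (H1 p (a * t) (b * t) hp ht2.1 ht2.2).2
    generalize hn : a * t = n at *
    generalize hmm : b * t = m at *
    have hn' : (1 : ℝ) ≤ n := by exact_mod_cast hn0
    have hm : (m : ℝ) = n / c := by
      rw [← hn, ← hmm, hcdef]; push_cast; field_simp
    have hxpos : 0 < 1 / (n : ℝ) ^ 2 := by positivity
    have hu : p * (c / (1 - c)) * (1 / (n : ℝ) ^ 2) < 1 := by
      have : 1 / (n : ℝ) ^ 2 < ρ := by linarith
      rw [hρ, lt_div_iff₀ (by positivity)] at this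
      linarith
    rw [approx_eq K p n m c hc hc1 hn0 hm hu] at b1
    have b2 := H2 (1 / (n : ℝ) ^ 2) hxpos ht1.le
    have hs : ∑ q ∈ Finset.range (N + 1), Dco' K p c q * (1 / (n : ℝ) ^ 2) ^ q
        = ∑ r : Fin N, Acoef p c (r.1 + 1) * (1 / (n : ℝ) ^ 2) ^ (r.1 + 1) := by
      rw [Finset.sum_range_succ', Dco'_zero, zero_mul, add_zero,
        Fin.sum_univ_eq_sum_range (fun r => Acoef p c (r + 1) * (1 / (n : ℝ) ^ 2) ^ (r + 1))]
      refine Finset.sum_congr rfl fun r hr => ?_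
      have := Finset.mem_range.1 hr
      rw [Dco'_succ K p c hc hc1 r (by omega)]
    rw [hs] at b2
    have hmn : (m : ℝ) - n = ((1 - c) / c) * n := by rw [hm]; field_simp
    have b3 : (n : ℝ) * (C1 / ((m : ℝ) - n) ^ (2 * K - 2))
        ≤ C1 / ((1 - c) / c) ^ (2 * K - 2) * (1 / (n : ℝ) ^ 2) ^ (N + 1) := by
      rw [hmn, mul_pow, div_pow 1, one_pow, ← pow_mul]
      have : (n : ℝ) ^ (2 * K - 2) = n ^ (2 * (N + 1)) * n * n := by
        rw [← pow_succ, ← pow_succ]; congr 1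
      rw [this]
      have hd : 0 < ((1 - c) / c) ^ (2 * K - 2) := by positivity
      generalize ((1 - c) / c) ^ (2 * K - 2) = d at *
      have e : (n : ℝ) * (C1 / (d * (n ^ (2 * (N + 1)) * n * n)))
        = C1 / d * (1 / (n : ℝ) ^ (2 * (N + 1))) * (1 / n) := by
        field_simp
      rw [e]
      refine mul_le_of_le_one_right (by positivity) ?_
      rw [div_le_one (by linarith)]; exact hn'
    rw [Real.norm_eq_abs, Real.norm_eq_abs, abs_of_pos (pow_pos hxpos (N + 1)), add_mul]
    set S := ∑ r : Fin N, Acoef p c (r.1 + 1) * (1 / (n : ℝ) ^ 2) ^ (r.1 + 1)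
    have : Real.log (mu0 p n m) - Acoef p c 0 - S
      = (Real.log (mu0 p n m) - (Acoef p c 0 + PhiF K p c (1 / (n : ℝ) ^ 2)))
        + (PhiF K p c (1 / (n : ℝ) ^ 2) - S) := by ring
    rw [this]
    exact (abs_add_le _ _).trans (add_le_add (b1.trans b3) b2)

lemma final_isBigO (p : ℕ) (hp : 0 < p) (a b : ℕ) (ha : 0 < a) (hab : a < b) (N : ℕ) :
    (fun t : ℕ => mu0 p (a * t) (b * t) -
          ∑ j ∈ Finset.range (N + 1), bcoef p ((a : ℝ) / b) j / ((a * t : ℕ) : ℝ) ^ (2 * j))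
      =O[atTop] (fun t : ℕ => 1 / ((a * t : ℕ) : ℝ) ^ (2 * (N + 1))) := by
  obtain ⟨h1, h2⟩ := log_expand p hp a b ha hab N
  have ha' : (0 : ℝ) < a := by exact_mod_cast ha
  have hnat : Tendsto (fun t : ℕ => ((a * t : ℕ) : ℝ)) atTop atTop := by
    push_cast
    exact tendsto_natCast_atTop_atTop.const_mul_atTop ha'
  have hx0 : Tendsto (fun t : ℕ => 1 / ((a * t : ℕ) : ℝ) ^ 2) atTop (𝓝 0) :=
    tendsto_const_nhds.div_atTop ((tendsto_pow_atTop (by norm_num)).comp hnat)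
  have h3 := (expo_expand (Acoef p ((a : ℝ) / b)) N _ _ hx0 h2).const_mul_left
    (Real.exp (Acoef p ((a : ℝ) / b) 0))
  have e : (fun t : ℕ => 1 / ((a * t : ℕ) : ℝ) ^ (2 * (N + 1)))
      = fun t : ℕ => (1 / ((a * t : ℕ) : ℝ) ^ 2) ^ (N + 1) := by
    funext t; rw [div_pow, one_pow, ← pow_mul]
  rw [e]
  refine h3.congr' ?_ EventuallyEq.rfl
  filter_upwards [h1] with t ht
  rw [mul_sub, ← Real.exp_add, add_sub_cancel, Real.exp_log ht, Finset.mul_sum]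
  congr 1
  refine Finset.sum_congr rfl fun j _ => ?_
  rw [div_pow, one_pow, ← pow_mul, ← mul_assoc, ← div_eq_mul_one_div]
  rfl

end Asym


/-- truncated asymptotic expansion of the moments `μ0(p,n,m)` in inverse
even powers of `n`, along the sequence `n = a·t`, `m = b·t` with `c = a/b ∈ (0,1)`. -/
theorem mu0_asymptotic_expansion (p : ℕ) (hp : 0 < p) (a b : ℕ) (ha : 0 < a) (hab : a < b)
    (N : ℕ) :
    ∃ C : ℝ, 0 < C ∧ ∃ T : ℕ, 0 < T ∧ ∀ t : ℕ, T ≤ t →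
      p < (a * t) * ((b * t) - (a * t) + 1) ∧
      |mu0 p (a * t) (b * t) -
          ∑ j ∈ Finset.range (N + 1), bcoef p ((a : ℝ) / b) j / ((a * t : ℕ) : ℝ) ^ (2 * j)|
        ≤ C / ((a * t : ℕ) : ℝ) ^ (2 * (N + 1)) := by
  have hO := final_isBigO p hp a b ha hab N
  obtain ⟨C, hC, hb⟩ := hO.exists_pos
  obtain ⟨T, hT⟩ := Filter.eventually_atTop.1 hb.bound
  refine ⟨C, hC, max T (p + 1), by omega, fun t ht => ⟨?_, ?_⟩⟩
  · have h1 : p + 1 ≤ t := le_trans (le_max_right _ _) ht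
    have h2 : t ≤ a * t := Nat.le_mul_of_pos_left t ha
    have h3 : a * t ≤ (a * t) * ((b * t) - (a * t) + 1) := Nat.le_mul_of_pos_right _ (by omega)
    omega
  · have := hT t (le_trans (le_max_left _ _) ht)
    rw [Real.norm_eq_abs, Real.norm_eq_abs, abs_of_nonneg (a := 1 / _) (by positivity),
      mul_one_div] at this
    exact this
end
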